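/- arXiv:2202.00877 — 3 statements merged into one kernel-verified Lean document; each statement's English description precedes it below -/
import Mathlib

section
/- Fix integers a, b ≥ 1. Assume that, as h → 0, ε = ε(h) → 0 with ε(h) ≥ h^{1/2−δ̄} eventually, for some fixed δ̄ ∈ (0,1/2). Then E( W_h^{a}·J_h^{b}·1_{|σW_h + J_h| ≤ ε} ) equals: O(h²·ε^{a+b−Y−2}) + O(h^{1+a/2}·ε^{b−Y/2}) if a is odd; O(h²·ε^{a+b−Y−2}) + O(h^{1+a/2}·ε^{b−Y}) if a and b are both even; and O(h²·ε^{a+b−Y−2}) + O(h^{(1+a)/2}·ε^{b−Y/2}) if a is even and b is odd. -/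
open MeasureTheory ProbabilityTheory Filter Asymptotics Set
open scoped Topology NNReal ENNReal Real

noncomputable section

/-- The Lévy density `s(x) = (C₊·1_{x>0} + C₋·1_{x<0})·q(x)·|x|^{−1−Y}`. -/
def levyDensity (Y Cp Cm : ℝ) (q : ℝ → ℝ) (x : ℝ) : ℝ :=
  (if 0 < x then Cp else if x < 0 then Cm else 0) * q x * |x| ^ (-1 - Y)

/-- The Lévy measure `ν(dx) = s(x) dx`. -/
def levyMeasure (Y Cp Cm : ℝ) (q : ℝ → ℝ) : Measure ℝ :=
  volume.withDensity fun x => ENNReal.ofReal (levyDensity Y Cp Cm q x)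

/-- The Lévy exponent `ψ_J(u) = ibu + ∫ (e^{iux} − 1 − iux·1_{|x|≤1}) ν(dx)`. -/
def psiJ (b Y Cp Cm : ℝ) (q : ℝ → ℝ) (u : ℝ) : ℂ :=
  Complex.I * b * u +
    ∫ x : ℝ,
      (Complex.exp (Complex.I * u * x) - 1 - (if |x| ≤ 1 then Complex.I * u * x else 0))
      ∂(levyMeasure Y Cp Cm q)

/-- The scale parameter `ς = ((C₊+C₋)Γ(−Y)|cos(πY/2)|)^{1/Y}`. -/
def varsigma (Y Cp Cm : ℝ) : ℝ :=
  ((Cp + Cm) * Real.Gamma (-Y) * |Real.cos (π * Y / 2)|) ^ (1 / Y)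

/-- The stable part of the Lévy exponent:
`ς^Y |u|^Y (1 − iβ·sgn(u)·tan(πY/2))` with `β = (C₊−C₋)/(C₊+C₋)`. -/
def stablePart (Y Cp Cm : ℝ) (u : ℝ) : ℂ :=
  (varsigma Y Cp Cm ^ Y * |u| ^ Y : ℝ) *
    (1 - Complex.I * ((Cp - Cm) / (Cp + Cm)) * Real.sign u * Real.tan (π * Y / 2))

/-- Characteristic function of `X̃_h`, the time-`h` marginal of a Brownian motion with
variance `σ²` plus an independent strictly `Y`-stable process. -/
def tildeCF (σ Y Cp Cm : ℝ) (h u : ℝ) : ℂ :=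
  Complex.exp (-(σ ^ 2 * u ^ 2 * h / 2) - h * stablePart Y Cp Cm u)


/-- The test function `(1+x²)^{-p}`. -/
def tF (p X : ℝ) : ℝ := (1 + X ^ 2) ^ (-p)

lemma tF_base_pos (X : ℝ) : 0 < 1 + X ^ 2 := by positivity

lemma tF_pos (p X : ℝ) : 0 < tF p X := Real.rpow_pos_of_pos (tF_base_pos X) _

lemma gamma_integral (p : ℝ) (hp : 0 < p) (f : ℝ → ℝ) :
    ∫ t, f t ∂(gammaMeasure p 1)
      = ∫ t in Ioi (0:ℝ), (1 / Real.Gamma p) * (t ^ (p - 1) * Real.exp (-t)) * f t := by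
  unfold gammaMeasure
  rw [integral_withDensity_eq_integral_toReal_smul (by unfold gammaPDF; fun_prop)
    (by simp [gammaPDF])]
  rw [← integral_indicator measurableSet_Ioi]
  apply integral_congr_ae
  have : ∀ᵐ t : ℝ, t ≠ 0 := by simp [ae_iff]
  filter_upwards [this] with t ht
  rcases lt_or_gt_of_ne ht with h | h
  · simp [gammaPDF_of_neg h, h.le]
  · rw [gammaPDF_of_nonneg h.le, ENNReal.toReal_ofReal (by
      have := Real.Gamma_pos_of_pos hp
      positivity)]
    simp [h]
    left; ring

lemma gamma_integrable_id (p : ℝ) (hp : 0 < p) :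
    Integrable (fun t : ℝ => t) (gammaMeasure p 1) := by
  unfold gammaMeasure
  rw [integrable_withDensity_iff_integrable_smul' (by unfold gammaPDF; fun_prop)
    (by simp [gammaPDF])]
  have h1 : IntegrableOn (fun t : ℝ => (1 / Real.Gamma p) * (Real.exp (-t) * t ^ ((p + 1) - 1)))
      (Ioi (0:ℝ)) := (Real.GammaIntegral_convergent (by linarith : 0 < p + 1)).const_mul _
  rw [← integrable_indicator_iff measurableSet_Ioi] at h1
  refine h1.congr ?_
  have : ∀ᵐ t : ℝ, t ≠ 0 := by simp [ae_iff]
  filter_upwards [this] with t ht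
  rcases lt_or_gt_of_ne ht with h | h
  · simp [gammaPDF_of_neg h, h.le]
  · rw [gammaPDF_of_nonneg h.le, ENNReal.toReal_ofReal (by
      have := Real.Gamma_pos_of_pos hp
      positivity)]
    have h2 : t ^ p = t ^ (p - 1) * t := by
      rw [Real.rpow_sub_one h.ne']; field_simp
    simp [h, h2]
    ring

lemma gamma_laplace (p : ℝ) (hp : 0 < p) (X : ℝ) :
    ∫ t, Real.exp (-(t * X ^ 2)) ∂(gammaMeasure p 1) = tF p X := by
  rw [gamma_integral p hp]
  have h := Real.integral_rpow_mul_exp_neg_mul_Ioi hp (tF_base_pos X)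
  have h2 : ∀ t : ℝ, (1 / Real.Gamma p) * (t ^ (p - 1) * Real.exp (-t)) * Real.exp (-(t * X ^ 2))
      = (1 / Real.Gamma p) * (t ^ (p - 1) * Real.exp (-((1 + X^2) * t))) := by
    intro t
    rw [mul_assoc, mul_assoc, ← Real.exp_add]
    congr 4; ring
  simp_rw [h2]
  rw [integral_const_mul, h, tF, Real.rpow_neg (tF_base_pos X).le, one_div (1 + X ^ 2), Real.inv_rpow (tF_base_pos X).le]
  have := (Real.Gamma_pos_of_pos hp).ne'
  field_simp

lemma gamma_ae_nonneg (p : ℝ) : ∀ᵐ t ∂(gammaMeasure p 1), 0 ≤ t := by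
  unfold gammaMeasure
  rw [ae_withDensity_iff (by unfold gammaPDF; fun_prop)]
  filter_upwards with t h
  by_contra hh
  exact h (gammaPDF_of_neg (by linarith))

lemma exists_test_measure (p : ℝ) (hp : 0 < p) :
    ∃ m : Measure ℝ, IsProbabilityMeasure m ∧ Integrable (fun v : ℝ => v ^ 2) m ∧
      ∀ X : ℝ, ∫ v : ℝ, Complex.exp (Complex.I * v * X) ∂m = (tF p X : ℂ) := by
  have i1 := isProbabilityMeasure_gammaMeasure hp one_pos
  set γ := gammaMeasure p 1 with hγ
  set M := γ.prod (gaussianReal 0 1)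
  have hm : Measurable (fun z : ℝ × ℝ => √(2 * z.1) * z.2) := by fun_prop
  refine ⟨M.map (fun z : ℝ × ℝ => √(2 * z.1) * z.2), Measure.isProbabilityMeasure_map hm.aemeasurable, ?_, ?_⟩
  · rw [integrable_map_measure (by fun_prop) hm.aemeasurable]
    have h1 : Integrable (fun n : ℝ => n ^ 2) (gaussianReal 0 1) :=
      (memLp_id_gaussianReal 2).integrable_sq
    have h2 := ((gamma_integrable_id p hp).const_mul 2).mul_prod h1
    refine h2.congr ?_
    have h3 : ∀ᵐ z ∂M, 0 ≤ z.1 :=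
      Measure.quasiMeasurePreserving_fst.ae (gamma_ae_nonneg p)
    filter_upwards [h3] with z hz
    simp only [Function.comp]
    rw [mul_pow, Real.sq_sqrt (by linarith)]
  · intro X
    rw [integral_map hm.aemeasurable (by fun_prop), integral_prod]
    · rw [← gamma_laplace p hp X, ← integral_complex_ofReal]
      apply integral_congr_ae
      filter_upwards [gamma_ae_nonneg p] with t ht
      have := charFun_gaussianReal (μ := 0) (v := 1) (√(2 * t) * X)
      rw [charFun_apply_real] at this
      convert this using 1
      · congr 1; ext n; congr 1; push_cast; ring
      · push_cast
        congr 1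
        have h2 : ((√(2 * t) : ℝ) : ℂ) ^ 2 = 2 * t := by
          rw [← Complex.ofReal_pow, Real.sq_sqrt (by linarith)]; push_cast; ring
        rw [mul_pow, h2]; simp; ring
    · refine Integrable.of_bound (C := 1) (by fun_prop) ?_
      filter_upwards with z
      rw [mul_assoc, ← Complex.ofReal_mul, Complex.norm_exp_I_mul_ofReal]

/-- Derivative of the test function. -/
def tFd (p X : ℝ) : ℝ := -2 * p * X * (1 + X ^ 2) ^ (-p - 1)

lemma hasDerivAt_tF (p X : ℝ) : HasDerivAt (tF p) (tFd p X) X := by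
  have h1 : HasDerivAt (fun X : ℝ => 1 + X ^ 2) (2 * X) X := by
    simpa using ((hasDerivAt_pow 2 X).const_add 1)
  have := h1.rpow_const (p := -p) (Or.inl (tF_base_pos X).ne')
  refine this.congr_deriv ?_
  unfold tFd; ring

/-- Second derivative of the test function. -/
def tFdd (p X : ℝ) : ℝ :=
  -2 * p * (1 + X ^ 2) ^ (-p - 1) + 4 * p * (p + 1) * X ^ 2 * (1 + X ^ 2) ^ (-p - 1 - 1)

lemma hasDerivAt_tFd (p X : ℝ) : HasDerivAt (tFd p) (tFdd p X) X := by
  have h1 : HasDerivAt (fun X : ℝ => 1 + X ^ 2) (2 * X) X := by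
    simpa using ((hasDerivAt_pow 2 X).const_add 1)
  have h2 := h1.rpow_const (p := -p - 1) (Or.inl (tF_base_pos X).ne')
  have h3 : HasDerivAt (fun X : ℝ => -2 * p * X) (-2 * p) X := by
    simpa using (hasDerivAt_id X).const_mul (-2 * p)
  have := h3.mul h2
  refine this.congr_deriv ?_
  unfold tFdd; ring

lemma tF_le_of {p c X Z : ℝ} (hp : 0 ≤ p) (hc : 0 < c) (h : 1 + X ^ 2 ≤ c * (1 + Z ^ 2)) :
    tF p Z ≤ c ^ p * tF p X := by
  have h1 : tF p Z = c ^ p * (c * (1 + Z ^ 2)) ^ (-p) := by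
    rw [Real.mul_rpow hc.le (tF_base_pos Z).le, ← mul_assoc, ← Real.rpow_add hc]
    simp [tF]
  rw [h1]
  gcongr
  exact Real.rpow_le_rpow_of_nonpos (tF_base_pos X) h (by linarith)

lemma tF_sub_one (p X : ℝ) : (1 + X ^ 2) ^ (-p - 1) = tF p X / (1 + X ^ 2) := by
  rw [Real.rpow_sub_one (tF_base_pos X).ne']; rfl

lemma tFd_le {p : ℝ} (hp : 0 ≤ p) (X : ℝ) : |tFd p X| ≤ p * tF p X := by
  unfold tFd
  rw [tF_sub_one, ← mul_div_assoc, abs_div, abs_of_pos (tF_base_pos X), div_le_iff₀ (tF_base_pos X),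
    abs_mul, abs_of_pos (tF_pos p X), abs_mul, abs_mul, abs_of_nonneg hp]
  have : 2 * |X| ≤ 1 + X ^ 2 := by
    have := sq_nonneg (|X| - 1)
    rw [← sq_abs X]; nlinarith
  have h2 := mul_le_mul_of_nonneg_left this (mul_nonneg hp (tF_pos p X).le)
  norm_num
  linarith

lemma tFdd_le {p : ℝ} (hp : 0 ≤ p) (X : ℝ) : |tFdd p X| ≤ (2 * p + 4 * p * (p + 1)) * tF p X := by
  unfold tFdd
  rw [Real.rpow_sub_one (tF_base_pos X).ne' (-p - 1), tF_sub_one]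
  have hpos := tF_base_pos X
  have hF := tF_pos p X
  have e1 : tF p X / (1 + X ^ 2) ≤ tF p X := div_le_self hF.le (by nlinarith)
  have e2 : X ^ 2 * (tF p X / (1 + X ^ 2) / (1 + X ^ 2)) ≤ tF p X := by
    have : X ^ 2 * (tF p X / (1 + X ^ 2) / (1 + X ^ 2))
      = (X ^ 2 / (1 + X ^ 2)) * (tF p X / (1 + X ^ 2)) := by ring
    rw [this]
    calc _ ≤ 1 * tF p X := by
          apply mul_le_mul _ e1 (by positivity) zero_le_one
          rw [div_le_one hpos]; linarith
      _ = _ := one_mul _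
  have a1 : 0 ≤ tF p X / (1 + X ^ 2) := by positivity
  have a2 : 0 ≤ X ^ 2 * (tF p X / (1 + X ^ 2) / (1 + X ^ 2)) := by positivity
  have c1 : 0 ≤ 2 * p := by positivity
  have c2 : 0 ≤ 4 * p * (p + 1) := by positivity
  have f1 := mul_le_mul_of_nonneg_left e1 c1
  have f2 := mul_le_mul_of_nonneg_left e2 c2
  have g1 := mul_nonneg c1 a1
  have g2 := mul_nonneg c2 a2
  rw [mul_assoc _ (X ^ 2)]
  rw [abs_le]; constructor <;> nlinarith [mul_nonneg c1 hF.le, mul_nonneg c2 hF.le]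

lemma tF_taylor {p : ℝ} (hp : 0 ≤ p) {X z : ℝ} (hz : |z| ≤ 1) :
    |tF p (X + z) - tF p X - z * tFd p X|
      ≤ (2 * p + 4 * p * (p + 1)) * 3 ^ p * tF p X * z ^ 2 := by
  set B := (2 * p + 4 * p * (p + 1)) * 3 ^ p * tF p X with hB
  have hB0 : 0 ≤ B := by have := tF_pos p X; positivity
  set S := Icc (X - |z|) (X + |z|) with hS
  have hXS : X ∈ S := ⟨by linarith [abs_nonneg z], by linarith [abs_nonneg z]⟩
  have hzS : X + z ∈ S := ⟨by linarith [neg_abs_le z], by linarith [le_abs_self z]⟩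
  have hconv : Convex ℝ S := convex_Icc _ _
  have b2 : ∀ w ∈ S, ‖tFdd p w‖ ≤ B := by
    intro w hw
    refine (tFdd_le hp w).trans ?_
    rw [hB, mul_assoc _ (3 ^ p)]
    gcongr
    apply tF_le_of hp (by norm_num)
    have : |w - X| ≤ 1 := (abs_le.mpr ⟨by linarith [hw.1], by linarith [hw.2]⟩ : |w - X| ≤ |z|).trans hz
    have h2 : (w - X) ^ 2 ≤ 1 := by rw [← sq_abs]; nlinarith [abs_nonneg (w - X)]
    nlinarith [sq_nonneg (w + (w - X))]
  have b1 : ∀ w ∈ S, ‖tFd p w - tFd p X‖ ≤ B * |z| := by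
    intro w hw
    have := hconv.norm_image_sub_le_of_norm_hasDerivWithin_le
      (fun x _ => (hasDerivAt_tFd p x).hasDerivWithinAt) b2 hXS hw
    refine this.trans ?_
    gcongr
    exact abs_le.mpr ⟨by linarith [hw.1], by linarith [hw.2]⟩
  have := hconv.norm_image_sub_le_of_norm_hasDerivWithin_le
      (f := fun w => tF p w - w * tFd p X) (f' := fun w => tFd p w - tFd p X)
      (fun x _ => ((hasDerivAt_tF p x).sub (by simpa using (hasDerivAt_id x).mul_const (tFd p X))).hasDerivWithinAt) b1 hXS hzS
  simp only [Real.norm_eq_abs] at this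
  calc _ = |tF p (X + z) - (X + z) * tFd p X - (tF p X - X * tFd p X)| := by congr 1; ring
    _ ≤ _ := this
    _ = B * z ^ 2 := by rw [add_sub_cancel_left, mul_assoc, ← sq, sq_abs]

lemma tF_mul_le {p : ℝ} (hp : 0 ≤ p) (X z : ℝ) :
    tF p (X + z) * tF p z ≤ 4 ^ p * tF p X * (tF p z + tF p (X + z)) := by
  have h1 := tF_pos p X
  have h2 := tF_pos p z
  have h3 := tF_pos p (X + z)
  have hc : (0:ℝ) < 4 ^ p := by positivity
  by_cases h : (X + z) ^ 2 ≤ z ^ 2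
  · have : tF p z ≤ 4 ^ p * tF p X := tF_le_of hp (by norm_num) (by nlinarith [sq_nonneg ((X + z) + z)])
    nlinarith [mul_pos hc h1, mul_pos (mul_pos hc h1) h2, mul_le_mul_of_nonneg_left this h3.le]
  · have : tF p (X + z) ≤ 4 ^ p * tF p X := tF_le_of hp (by norm_num) (by nlinarith [sq_nonneg ((X + z) + z)])
    nlinarith [mul_pos hc h1, mul_pos (mul_pos hc h1) h3, mul_le_mul_of_nonneg_right this h2.le]

/-- Integrable weight. -/
def wt (Y z : ℝ) : ℝ := if |z| ≤ 1 then |z| ^ (1 - Y) else |z| ^ (-Y)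

lemma wt_nonneg (Y z : ℝ) : 0 ≤ wt Y z := by unfold wt; split_ifs <;> positivity

lemma wt_integrable {Y : ℝ} (hY1 : 1 < Y) (hY2 : Y < 2) : Integrable (wt Y) := by
  have := (integrable_fun_norm_addHaar (volume : Measure ℝ)
    (f := fun z : ℝ => if z ≤ 1 then z ^ (1 - Y) else z ^ (-Y))).2 (by
      simp only [Module.finrank_self, tsub_self, pow_zero, one_smul]
      rw [← Ioc_union_Ioi_eq_Ioi zero_le_one]
      apply IntegrableOn.union
      · have := (intervalIntegral.intervalIntegrable_rpow' (a := 0) (b := 1) (r := 1 - Y) (by linarith))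
        rw [intervalIntegrable_iff_integrableOn_Ioc_of_le zero_le_one] at this
        refine this.congr_fun (fun x hx => by simp [hx.2]) measurableSet_Ioc
      · refine (integrableOn_Ioi_rpow_of_lt (a := -Y) (by linarith) one_pos).congr_fun
          (fun x hx => by simp [not_le.2 (mem_Ioi.1 hx)]) measurableSet_Ioi)
  exact this

lemma tF_integrable {p : ℝ} (hp : 1 / 2 < p) : Integrable (tF p) := by
  have := integrable_rpow_neg_one_add_norm_sq (E := ℝ) (μ := volume) (r := 2 * p) (by simp; linarith)
  refine this.congr (Eventually.of_forall fun x => ?_)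
  have e : -(2 * p) / 2 = -p := by ring
  simp [tF, e]

/-- Constant in the pointwise estimate. -/
def cK (p : ℝ) : ℝ := (2 * p + 4 * p * (p + 1)) * 3 ^ p + 2 ^ p * 4 ^ p + 1 + p

lemma tF_pointwise {Y : ℝ} (hY1 : 1 < Y) {s : ℝ} (hs : 0 < s) (hs1 : s ≤ 1) (X z : ℝ) :
    |tF ((1 + Y) / 2) (X + z) - tF ((1 + Y) / 2) X -
        (if |s * z| ≤ 1 then z * tFd ((1 + Y) / 2) X else 0)| * |z| ^ (-1 - Y)
      ≤ cK ((1 + Y) / 2) * tF ((1 + Y) / 2) X *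
        (wt Y z + (tF ((1 + Y) / 2) z + tF ((1 + Y) / 2) (X + z))) := by
  set p := (1 + Y) / 2 with hp
  have hp0 : 0 ≤ p := by rw [hp]; linarith
  have h1 := tF_pos p X
  have h2 := tF_pos p z
  have h3 := tF_pos p (X + z)
  have hw := wt_nonneg Y z
  have hA : 0 ≤ (2 * p + 4 * p * (p + 1)) * 3 ^ p := by positivity
  have hBp : (0:ℝ) ≤ 2 ^ p * 4 ^ p := by positivity
  by_cases hz : |z| ≤ 1
  · have hsz : |s * z| ≤ 1 := by
      rw [abs_mul, abs_of_pos hs]; nlinarith [abs_nonneg z]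
    rw [if_pos hsz]
    have hT := tF_taylor hp0 (X := X) hz
    have e : z ^ 2 * |z| ^ (-1 - Y) ≤ wt Y z := by
      rw [wt, if_pos hz]
      rcases eq_or_ne z 0 with h0 | h0
      · simp [h0]; positivity
      · have : 0 < |z| := abs_pos.2 h0
        rw [← sq_abs, ← Real.rpow_natCast, ← Real.rpow_add this]
        apply le_of_eq; congr 1; push_cast; ring
    calc _ ≤ ((2 * p + 4 * p * (p + 1)) * 3 ^ p * tF p X * z ^ 2) * |z| ^ (-1 - Y) := by gcongr
      _ = ((2 * p + 4 * p * (p + 1)) * 3 ^ p) * tF p X * (z ^ 2 * |z| ^ (-1 - Y)) := by ring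
      _ ≤ ((2 * p + 4 * p * (p + 1)) * 3 ^ p) * tF p X * wt Y z := by gcongr
      _ ≤ cK p * tF p X * (wt Y z + (tF p z + tF p (X + z))) := by
        have e1 : (2 * p + 4 * p * (p + 1)) * 3 ^ p ≤ cK p := by unfold cK; linarith
        have e2 : 0 ≤ cK p := hA.trans e1
        gcongr
        linarith
  · push Not at hz
    have hz0 : 0 < |z| := by linarith
    have hwz : wt Y z = |z| ^ (-Y) := by rw [wt, if_neg (not_le.2 hz)]
    have hb : |tF p (X + z) - tF p X - (if |s * z| ≤ 1 then z * tFd p X else 0)|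
        ≤ tF p (X + z) + tF p X + |z| * (p * tF p X) := by
      have i1 : |if |s * z| ≤ 1 then z * tFd p X else 0| ≤ |z| * (p * tF p X) := by
        split_ifs
        · rw [abs_mul]; gcongr; exact tFd_le hp0 X
        · simp; positivity
      rw [abs_le] at i1 ⊢
      constructor <;> linarith [i1.1, i1.2]
    have e1 : |z| ^ (-1 - Y) ≤ 2 ^ p * tF p z := by
      have : |z| ^ (-1 - Y) = (z ^ 2) ^ (-p) := by
        rw [← sq_abs, ← Real.rpow_natCast, ← Real.rpow_mul hz0.le]; congr 1; rw [hp]; push_cast; ring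
      rw [this]
      have h1z : 1 ≤ z ^ 2 := by rw [← sq_abs]; nlinarith
      have : (2:ℝ) ^ p * tF p z = ((1 + z ^ 2) / 2) ^ (-p) := by
        rw [Real.div_rpow (by positivity) (by norm_num), Real.rpow_neg (by norm_num : (0:ℝ) ≤ 2)]
        simp [tF]; ring
      rw [this]
      exact Real.rpow_le_rpow_of_nonpos (by positivity) (by linarith) (by linarith)
    have e2 : |z| * |z| ^ (-1 - Y) = wt Y z := by
      rw [hwz]; nth_rewrite 1 [← Real.rpow_one |z|]; rw [← Real.rpow_add hz0]; congr 1; ring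
    have e3 : |z| ^ (-1 - Y) ≤ wt Y z := by
      rw [← e2]; exact le_mul_of_one_le_left (by positivity) hz.le
    calc _ ≤ (tF p (X + z) + tF p X + |z| * (p * tF p X)) * |z| ^ (-1 - Y) := by gcongr
      _ = tF p (X + z) * |z| ^ (-1 - Y) + tF p X * |z| ^ (-1 - Y)
            + p * tF p X * (|z| * |z| ^ (-1 - Y)) := by ring
      _ ≤ tF p (X + z) * (2 ^ p * tF p z) + tF p X * wt Y z + p * tF p X * wt Y z := by
          rw [e2]; gcongr
      _ = 2 ^ p * (tF p (X + z) * tF p z) + (1 + p) * tF p X * wt Y z := by ring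
      _ ≤ 2 ^ p * (4 ^ p * tF p X * (tF p z + tF p (X + z))) + (1 + p) * tF p X * wt Y z := by
          have := tF_mul_le hp0 X z
          have h2p : (0:ℝ) ≤ 2 ^ p := by positivity
          linarith [mul_le_mul_of_nonneg_left this h2p]
      _ = (1 + p) * tF p X * wt Y z + 2 ^ p * 4 ^ p * tF p X * (tF p z + tF p (X + z)) := by ring
      _ ≤ cK p * tF p X * wt Y z + cK p * tF p X * (tF p z + tF p (X + z)) := by
          gcongr
          · unfold cK; linarith
          · unfold cK; linarith
      _ = _ := by ring

lemma tF_measurable (p : ℝ) : Measurable (tF p) := by unfold tF; fun_prop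

/-- Integral form of the pointwise estimate, in the original scale. -/
lemma tF_integral_bound {Y : ℝ} (hY1 : 1 < Y) (hY2 : Y < 2) :
    ∃ K : ℝ, 0 ≤ K ∧ ∀ s : ℝ, 0 < s → s ≤ 1 → ∀ X : ℝ,
      Integrable (fun y : ℝ => |tF ((1 + Y) / 2) (X + y / s) - tF ((1 + Y) / 2) X -
        (if |y| ≤ 1 then (y / s) * tFd ((1 + Y) / 2) X else 0)| * |y| ^ (-1 - Y)) ∧
      ∫ y : ℝ, |tF ((1 + Y) / 2) (X + y / s) - tF ((1 + Y) / 2) X -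
        (if |y| ≤ 1 then (y / s) * tFd ((1 + Y) / 2) X else 0)| * |y| ^ (-1 - Y)
        ≤ K * s ^ (-Y) * tF ((1 + Y) / 2) X := by
  set p := (1 + Y) / 2 with hp
  have hp0 : 0 ≤ p := by rw [hp]; linarith
  have hcK : 0 ≤ cK p := by unfold cK; positivity
  have hFi : Integrable (tF p) := tF_integrable (by rw [hp]; linarith)
  have hwi := wt_integrable hY1 hY2
  have hI1 : 0 ≤ ∫ z, wt Y z := integral_nonneg (wt_nonneg Y)
  have hI2 : 0 ≤ ∫ z, tF p z := integral_nonneg (fun z => (tF_pos p z).le)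
  refine ⟨cK p * ((∫ z, wt Y z) + ((∫ z, tF p z) + ∫ z, tF p z)), by positivity, ?_⟩
  intro s hs hs1 X
  set g : ℝ → ℝ := fun z => |tF p (X + z) - tF p X -
        (if |s * z| ≤ 1 then z * tFd p X else 0)| * |z| ^ (-1 - Y) with hg
  have hbi : Integrable (fun z => cK p * tF p X * (wt Y z + (tF p z + tF p (X + z)))) :=
    (hwi.add (hFi.add (hFi.comp_add_left X))).const_mul _
  have hgm : Measurable g := by
    have := tF_measurable p
    apply Measurable.mul
    · apply Measurable.abs
      apply Measurable.sub (by fun_prop)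
      exact Measurable.ite (measurableSet_le (by fun_prop) (by fun_prop)) (by fun_prop) (by fun_prop)
    · fun_prop
  have hgi : Integrable g := by
    refine hbi.mono' hgm.aestronglyMeasurable (Eventually.of_forall fun z => ?_)
    rw [Real.norm_eq_abs, abs_of_nonneg (by rw [hg]; positivity)]
    exact tF_pointwise hY1 hs hs1 X z
  have hgint : ∫ z, g z ≤ cK p * ((∫ z, wt Y z) + ((∫ z, tF p z) + ∫ z, tF p z)) * tF p X := by
    calc _ ≤ ∫ z, cK p * tF p X * (wt Y z + (tF p z + tF p (X + z))) :=
          integral_mono hgi hbi (fun z => tF_pointwise hY1 hs hs1 X z)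
      _ = cK p * tF p X * ((∫ z, wt Y z) + ((∫ z, tF p z) + ∫ z, tF p z)) := by
          rw [integral_const_mul, integral_add hwi (show Integrable (fun z => tF p z + tF p (X + z)) from hFi.add (hFi.comp_add_left X)),
            integral_add hFi (hFi.comp_add_left X), integral_add_left_eq_self]
      _ = _ := by ring
  have hsc : (fun y : ℝ => |tF p (X + y / s) - tF p X -
        (if |y| ≤ 1 then (y / s) * tFd p X else 0)| * |y| ^ (-1 - Y))
        = fun y => s ^ (-1 - Y) * g (y / s) := by
    funext y
    have e1 : s * (y / s) = y := by field_simp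
    simp only [hg, e1]
    rw [abs_div, abs_of_pos hs, Real.div_rpow (abs_nonneg y) hs.le]
    have : s ^ (-1 - Y) ≠ 0 := (Real.rpow_pos_of_pos hs _).ne'
    field_simp
  rw [hsc]
  refine ⟨(hgi.comp_div hs.ne').const_mul _, ?_⟩
  rw [integral_const_mul, Measure.integral_comp_div, abs_of_pos hs, smul_eq_mul, ← mul_assoc]
  have : s ^ (-1 - Y) * s = s ^ (-Y) := by
    nth_rewrite 2 [← Real.rpow_one s]; rw [← Real.rpow_add hs]; congr 1; ring
  rw [this]
  calc _ ≤ s ^ (-Y) * _ := mul_le_mul_of_nonneg_left hgint (by positivity)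
    _ = _ := by ring

lemma levyDensity_nonneg {Y Cp Cm : ℝ} {q : ℝ → ℝ} (hCp : 0 < Cp) (hCm : 0 < Cm)
    (hq : ∀ x, 0 ≤ q x) (x : ℝ) : 0 ≤ levyDensity Y Cp Cm q x := by
  unfold levyDensity
  have := hq x
  split_ifs <;> positivity

lemma levyDensity_le {Y Cp Cm M : ℝ} {q : ℝ → ℝ} (hCp : 0 < Cp) (hCm : 0 < Cm)
    (hq : ∀ x, 0 ≤ q x) (hM : ∀ x, q x ≤ M) (x : ℝ) :
    levyDensity Y Cp Cm q x ≤ (Cp + Cm) * M * |x| ^ (-1 - Y) := by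
  unfold levyDensity
  have h1 := hq x
  have h2 := hM x
  gcongr
  split_ifs <;> linarith

lemma levyDensity_measurable {Y Cp Cm : ℝ} {q : ℝ → ℝ} (hq : Measurable q) :
    Measurable (levyDensity Y Cp Cm q) := by
  unfold levyDensity
  apply Measurable.mul
  · apply Measurable.mul _ hq
    exact Measurable.ite measurableSet_Ioi measurable_const
      (Measurable.ite measurableSet_Iio measurable_const measurable_const)
  · fun_prop

instance levyMeasure_sfinite (Y Cp Cm : ℝ) (q : ℝ → ℝ) : SFinite (levyMeasure Y Cp Cm q) := by
  unfold levyMeasure; infer_instance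

lemma nu_bound {Y Cp Cm M : ℝ} {q : ℝ → ℝ} (hCp : 0 < Cp) (hCm : 0 < Cm)
    (hqm : Measurable q) (hq : ∀ x, 0 ≤ q x) (hM : ∀ x, q x ≤ M)
    {E : Type*} [NormedAddCommGroup E] [NormedSpace ℝ E] {φ : ℝ → E}
    (hφ : StronglyMeasurable φ) (hi : Integrable (fun y => ‖φ y‖ * |y| ^ (-1 - Y))) :
    Integrable φ (levyMeasure Y Cp Cm q) ∧
      ‖∫ y, φ y ∂(levyMeasure Y Cp Cm q)‖
        ≤ (Cp + Cm) * M * ∫ y, ‖φ y‖ * |y| ^ (-1 - Y) := by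
  have hdm : Measurable (fun x => ENNReal.ofReal (levyDensity Y Cp Cm q x)) :=
    (levyDensity_measurable hqm).ennreal_ofReal
  have hb : ∀ y, ‖(ENNReal.ofReal (levyDensity Y Cp Cm q y)).toReal • φ y‖
      ≤ (Cp + Cm) * M * (‖φ y‖ * |y| ^ (-1 - Y)) := by
    intro y
    have h0 := levyDensity_nonneg (Y := Y) hCp hCm hq y
    rw [norm_smul, ENNReal.toReal_ofReal h0, Real.norm_eq_abs, abs_of_nonneg h0]
    calc _ ≤ ((Cp + Cm) * M * |y| ^ (-1 - Y)) * ‖φ y‖ := by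
          gcongr; exact levyDensity_le hCp hCm hq hM y
      _ = _ := by ring
  unfold levyMeasure
  rw [integrable_withDensity_iff_integrable_smul' hdm (by simp),
    integral_withDensity_eq_integral_toReal_smul hdm (by simp)]
  have hi2 := hi.const_mul ((Cp + Cm) * M)
  constructor
  · exact hi2.mono' (hdm.ennreal_toReal.stronglyMeasurable.smul hφ).aestronglyMeasurable
      (Eventually.of_forall hb)
  · rw [← integral_const_mul]
    exact norm_integral_le_of_norm_le hi2 (Eventually.of_forall hb)

/-- The truncation weight `min(1,y²)`. -/
def w0 (y : ℝ) : ℝ := if |y| ≤ 1 then y ^ 2 else 1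

lemma w0_nonneg (y : ℝ) : 0 ≤ w0 y := by unfold w0; split_ifs <;> positivity

lemma w0_measurable : Measurable w0 :=
  Measurable.ite (measurableSet_le (by fun_prop) (by fun_prop)) (by fun_prop) (by fun_prop)

lemma w0_le_wt (Y y : ℝ) : w0 y * |y| ^ (-1 - Y) ≤ wt Y y := by
  unfold w0 wt
  split_ifs with h
  · rcases eq_or_ne y 0 with h0 | h0
    · simp [h0]; positivity
    · have : 0 < |y| := abs_pos.2 h0
      rw [← sq_abs, ← Real.rpow_natCast, ← Real.rpow_add this]
      apply le_of_eq; congr 1; push_cast; ring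
  · rw [one_mul]
    exact Real.rpow_le_rpow_of_exponent_le (by linarith) (by linarith)

lemma w0_integrable {Y Cp Cm M : ℝ} {q : ℝ → ℝ} (hY1 : 1 < Y) (hY2 : Y < 2) (hCp : 0 < Cp) (hCm : 0 < Cm)
    (hqm : Measurable q) (hq : ∀ x, 0 ≤ q x) (hM : ∀ x, q x ≤ M) :
    Integrable w0 (levyMeasure Y Cp Cm q) := by
  refine (nu_bound hCp hCm hqm hq hM w0_measurable.stronglyMeasurable ?_).1
  have := w0_measurable
  refine (wt_integrable hY1 hY2).mono' (by fun_prop) (Eventually.of_forall fun y => ?_)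
  have h0 := w0_nonneg y
  rw [Real.norm_eq_abs, abs_of_nonneg (by positivity), Real.norm_eq_abs, abs_of_nonneg h0]
  exact w0_le_wt Y y

/-- The Lévy–Khintchine kernel. -/
def lk (u y : ℝ) : ℂ :=
  Complex.exp (Complex.I * u * y) - 1 - (if |y| ≤ 1 then Complex.I * u * y else 0)

lemma lk_measurable : Measurable (fun z : ℝ × ℝ => lk z.1 z.2) := by
  unfold lk
  apply Measurable.sub (by fun_prop)
  exact Measurable.ite (measurableSet_le (by fun_prop) (by fun_prop)) (by fun_prop) (by fun_prop)

lemma norm_exp_I (u y : ℝ) : ‖Complex.exp (Complex.I * u * y)‖ = 1 := by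
  rw [mul_assoc, ← Complex.ofReal_mul, Complex.norm_exp_I_mul_ofReal]

lemma lk_norm_le (u y : ℝ) : ‖lk u y‖ ≤ 3 * (1 + u ^ 2) * w0 y := by
  unfold lk w0
  split_ifs with h
  · have hn : ‖Complex.I * u * y‖ = |u * y| := by simp [abs_mul]
    have hsq : |u * y| ^ 2 = u ^ 2 * y ^ 2 := by rw [sq_abs]; ring
    by_cases h1 : |u * y| ≤ 1
    · have := Complex.norm_exp_sub_one_sub_id_le (x := Complex.I * u * y) (by rw [hn]; exact h1)
      rw [hn, hsq] at this
      nlinarith [sq_nonneg y, mul_nonneg (sq_nonneg u) (sq_nonneg y)]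
    · push Not at h1
      have : ‖Complex.exp (Complex.I * u * y) - 1 - Complex.I * u * y‖ ≤ 1 + 1 + |u * y| := by
        refine (norm_sub_le _ _).trans ?_
        rw [hn]
        gcongr
        refine (norm_sub_le _ _).trans ?_
        rw [norm_exp_I]; simp
      nlinarith [sq_nonneg y, mul_nonneg (sq_nonneg u) (sq_nonneg y)]
  · rw [sub_zero]
    refine (norm_sub_le _ _).trans ?_
    rw [norm_exp_I]; simp; nlinarith [sq_nonneg u]

lemma lk_exp_measurable (s X : ℝ) : Measurable
    (fun z : ℝ × ℝ => lk (z.1 / s) z.2 * Complex.exp (Complex.I * z.1 * X)) := by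
  apply Measurable.mul _ (by fun_prop)
  exact lk_measurable.comp (f := fun z : ℝ × ℝ => (z.1 / s, z.2)) (by fun_prop)

section generator

variable {Y Cp Cm M b₀ : ℝ} {q : ℝ → ℝ}

lemma psiJ_measurable : Measurable (psiJ b₀ Y Cp Cm q) := by
  unfold psiJ
  apply Measurable.add (by fun_prop)
  exact (StronglyMeasurable.integral_prod_right
    (f := lk) (ν := levyMeasure Y Cp Cm q) lk_measurable.stronglyMeasurable).measurable

lemma psiJ_le (hY1 : 1 < Y) (hY2 : Y < 2) (hCp : 0 < Cp) (hCm : 0 < Cm)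
    (hqm : Measurable q) (hq : ∀ x, 0 ≤ q x) (hM : ∀ x, q x ≤ M) :
    ∃ K : ℝ, 0 ≤ K ∧ ∀ u, ‖psiJ b₀ Y Cp Cm q u‖ ≤ K * (1 + u ^ 2) := by
  have hw := w0_integrable hY1 hY2 hCp hCm hqm hq hM
  have hw0 : 0 ≤ ∫ y, w0 y ∂(levyMeasure Y Cp Cm q) := integral_nonneg w0_nonneg
  refine ⟨|b₀| + 3 * ∫ y, w0 y ∂(levyMeasure Y Cp Cm q), by positivity, fun u => ?_⟩
  unfold psiJ
  refine (norm_add_le _ _).trans ?_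
  have h1 : ‖Complex.I * b₀ * u‖ ≤ |b₀| * (1 + u ^ 2) := by
    simp only [norm_mul, Complex.norm_I, one_mul, Complex.norm_real, Real.norm_eq_abs]
    gcongr
    rw [← sq_abs u]; nlinarith [sq_nonneg (|u| - 1)]
  have h2 : ‖∫ y, lk u y ∂(levyMeasure Y Cp Cm q)‖
      ≤ 3 * (1 + u ^ 2) * ∫ y, w0 y ∂(levyMeasure Y Cp Cm q) := by
    rw [← integral_const_mul]
    exact norm_integral_le_of_norm_le (hw.const_mul _) (Eventually.of_forall (lk_norm_le u))
  have h2' := h2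
  simp only [lk] at h2'
  linarith

lemma psiJ_scaled_integrable (hY1 : 1 < Y) (hY2 : Y < 2) (hCp : 0 < Cp) (hCm : 0 < Cm)
    (hqm : Measurable q) (hq : ∀ x, 0 ≤ q x) (hM : ∀ x, q x ≤ M)
    (m : Measure ℝ) [IsProbabilityMeasure m] (hm2 : Integrable (fun v : ℝ => v ^ 2) m) (s : ℝ) :
    Integrable (fun v => psiJ b₀ Y Cp Cm q (v / s)) m := by
  obtain ⟨K, hK, hb⟩ := psiJ_le (b₀ := b₀) hY1 hY2 hCp hCm hqm hq hM
  have : Integrable (fun v : ℝ => K * (1 + (v / s) ^ 2)) m := by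
    simp_rw [div_pow]
    exact ((integrable_const _).add (hm2.div_const _)).const_mul _
  refine this.mono' (psiJ_measurable.comp (by fun_prop)).aestronglyMeasurable
    (Eventually.of_forall fun v => hb _)

lemma v_integrable (m : Measure ℝ) [IsProbabilityMeasure m]
    (hm2 : Integrable (fun v : ℝ => v ^ 2) m) : Integrable (fun v : ℝ => v) m := by
  refine ((integrable_const (1:ℝ)).add hm2).mono' (by fun_prop) (Eventually.of_forall fun v => ?_)
  rw [Real.norm_eq_abs]; simp only [Pi.add_apply]; rw [← sq_abs v]; nlinarith [sq_nonneg (|v| - 1)]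

lemma exp_integrable (m : Measure ℝ) [IsProbabilityMeasure m] (X : ℝ) :
    Integrable (fun v : ℝ => Complex.exp (Complex.I * v * X)) m :=
  Integrable.of_bound (C := 1) (by fun_prop)
    (Eventually.of_forall fun v => (norm_exp_I v X).le)

lemma mul_exp_integrable (m : Measure ℝ) {φ : ℝ → ℂ} (hφ : Integrable φ m) (X : ℝ) :
    Integrable (fun v : ℝ => φ v * Complex.exp (Complex.I * v * X)) m :=
  hφ.mul_bdd (c := 1) (by fun_prop) (Eventually.of_forall fun v => (norm_exp_I v X).le)

lemma cf_deriv (p : ℝ) (m : Measure ℝ) [IsProbabilityMeasure m]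
    (hm2 : Integrable (fun v : ℝ => v ^ 2) m)
    (hcf : ∀ X : ℝ, ∫ v : ℝ, Complex.exp (Complex.I * v * X) ∂m = (tF p X : ℂ)) (X : ℝ) :
    ∫ v : ℝ, (Complex.I * v) * Complex.exp (Complex.I * v * X) ∂m = (tFd p X : ℂ) := by
  have h1 := hasDerivAt_integral_of_dominated_loc_of_deriv_le (μ := m) (s := univ) (x₀ := X)
    (F := fun (X : ℝ) (v : ℝ) => Complex.exp (Complex.I * v * X))
    (F' := fun (X : ℝ) (v : ℝ) => (Complex.I * v) * Complex.exp (Complex.I * v * X))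
    (bound := fun v => |v|) univ_mem (Eventually.of_forall fun X => by fun_prop)
    (exp_integrable m X) (by fun_prop)
    (Eventually.of_forall fun v X _ => by rw [norm_mul, norm_exp_I]; simp)
    (v_integrable m hm2).abs
    (Eventually.of_forall fun v X _ => by
      have h2 : HasDerivAt (fun X : ℝ => Complex.I * v * (X : ℂ)) (Complex.I * v) X := by
        simpa using (Complex.ofRealCLM.hasDerivAt (x := X)).const_mul (Complex.I * v)
      exact h2.cexp.congr_deriv (mul_comm _ _))
  have h3 := h1.2
  simp_rw [hcf] at h3
  exact h3.unique (hasDerivAt_tF p X).ofReal_comp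

lemma gen_inner (p : ℝ) (m : Measure ℝ) [IsProbabilityMeasure m]
    (hm2 : Integrable (fun v : ℝ => v ^ 2) m)
    (hcf : ∀ X : ℝ, ∫ v : ℝ, Complex.exp (Complex.I * v * X) ∂m = (tF p X : ℂ)) (X s y : ℝ) :
    ∫ v : ℝ, lk (v / s) y * Complex.exp (Complex.I * v * X) ∂m
      = ((tF p (X + y / s) - tF p X - (if |y| ≤ 1 then (y / s) * tFd p X else 0) : ℝ) : ℂ) := by
  have hIv : Integrable (fun v : ℝ => (Complex.I * v) * Complex.exp (Complex.I * v * X)) m :=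
    mul_exp_integrable m ((v_integrable m hm2).ofReal.const_mul _) X
  have e : ∀ v : ℝ, lk (v / s) y * Complex.exp (Complex.I * v * X)
      = Complex.exp (Complex.I * v * (X + y / s : ℝ)) - Complex.exp (Complex.I * v * X)
        - (if |y| ≤ 1 then ((y / s : ℝ) : ℂ) else 0) *
          ((Complex.I * v) * Complex.exp (Complex.I * v * X)) := by
    intro v
    have : Complex.exp (Complex.I * v * (X + y / s : ℝ))
      = Complex.exp (Complex.I * (v / s : ℝ) * y) * Complex.exp (Complex.I * v * X) := by
      rw [← Complex.exp_add]; congr 1; push_cast; ring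
    rw [this, lk]
    split_ifs <;> push_cast <;> ring
  simp_rw [e]
  have hd : Integrable (fun v : ℝ => Complex.exp (Complex.I * v * (X + y / s : ℝ))
      - Complex.exp (Complex.I * v * X)) m := (exp_integrable m _).sub (exp_integrable m _)
  rw [integral_sub hd (hIv.const_mul _),
    integral_sub (exp_integrable m _) (exp_integrable m _), hcf, hcf, integral_const_mul,
    cf_deriv p m hm2 hcf]
  split_ifs <;> push_cast <;> ring

lemma generator_bound (hY1 : 1 < Y) (hY2 : Y < 2) (hCp : 0 < Cp) (hCm : 0 < Cm)
    (hqm : Measurable q) (hq : ∀ x, 0 ≤ q x) (hM : ∀ x, q x ≤ M)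
    (m : Measure ℝ) [IsProbabilityMeasure m] (hm2 : Integrable (fun v : ℝ => v ^ 2) m)
    (hcf : ∀ X : ℝ, ∫ v : ℝ, Complex.exp (Complex.I * v * X) ∂m = (tF ((1 + Y) / 2) X : ℂ)) :
    ∃ K : ℝ, 0 ≤ K ∧ ∀ s : ℝ, 0 < s → s ≤ 1 → ∀ X : ℝ,
      ‖∫ v : ℝ, psiJ b₀ Y Cp Cm q (v / s) * Complex.exp (Complex.I * v * X) ∂m‖
        ≤ K * s ^ (-Y) * tF ((1 + Y) / 2) X := by
  obtain ⟨K, hK, hKb⟩ := tF_integral_bound hY1 hY2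
  set p := (1 + Y) / 2 with hp
  have hp0 : 0 ≤ p := by rw [hp]; linarith
  have hM0 : 0 ≤ M := (hq 0).trans (hM 0)
  have hw := w0_integrable hY1 hY2 hCp hCm hqm hq hM
  refine ⟨|b₀| * p + (Cp + Cm) * M * K, by positivity, ?_⟩
  intro s hs hs1 X
  obtain ⟨hintg, hle⟩ := hKb s hs hs1 X
  set ν := levyMeasure Y Cp Cm q with hν
  have hprod : Integrable (fun z : ℝ × ℝ => lk (z.1 / s) z.2 * Complex.exp (Complex.I * z.1 * X))
      (m.prod ν) := by
    have h1 : Integrable (fun v : ℝ => 3 * (1 + (v / s) ^ 2)) m := by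
      simp_rw [div_pow]
      exact ((integrable_const _).add (hm2.div_const _)).const_mul _
    refine (h1.mul_prod hw).mono' (lk_exp_measurable s X).aestronglyMeasurable
      (Eventually.of_forall fun z => ?_)
    rw [norm_mul, norm_exp_I, mul_one]
    exact lk_norm_le _ _
  have hIv : Integrable (fun v : ℝ => (Complex.I * v) * Complex.exp (Complex.I * v * X)) m :=
    mul_exp_integrable m ((v_integrable m hm2).ofReal.const_mul _) X
  have e1 : ∀ v : ℝ, psiJ b₀ Y Cp Cm q (v / s) * Complex.exp (Complex.I * v * X)
      = ((b₀ / s : ℝ) : ℂ) * ((Complex.I * v) * Complex.exp (Complex.I * v * X))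
        + ∫ y, lk (v / s) y * Complex.exp (Complex.I * v * X) ∂ν := by
    intro v
    rw [integral_mul_const]
    unfold psiJ lk
    push_cast; ring
  simp_rw [e1]
  rw [integral_add (hIv.const_mul _) hprod.integral_prod_left, integral_const_mul,
    cf_deriv p m hm2 hcf, integral_integral_swap hprod]
  simp_rw [gen_inner p m hm2 hcf]
  refine (norm_add_le _ _).trans ?_
  have hsY : 1 / s ≤ s ^ (-Y) := by
    rw [one_div, ← Real.rpow_neg_one]
    exact Real.rpow_le_rpow_of_exponent_ge hs hs1 (by linarith)
  have b1 : ‖((b₀ / s : ℝ) : ℂ) * (tFd p X : ℂ)‖ ≤ |b₀| * p * s ^ (-Y) * tF p X := by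
    rw [norm_mul, Complex.norm_real, Complex.norm_real, Real.norm_eq_abs, Real.norm_eq_abs,
      abs_div, abs_of_pos hs]
    calc |b₀| / s * |tFd p X| = |b₀| * (1 / s) * |tFd p X| := by ring
      _ ≤ |b₀| * s ^ (-Y) * (p * tF p X) := by gcongr; exact tFd_le hp0 X
      _ = _ := by ring
  have b2 := nu_bound (Y := Y) hCp hCm hqm hq hM (E := ℂ) (φ := fun y : ℝ =>
    ((tF p (X + y / s) - tF p X - (if |y| ≤ 1 then (y / s) * tFd p X else 0) : ℝ) : ℂ))
    (by
      have := tF_measurable p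
      apply Measurable.stronglyMeasurable
      apply Complex.measurable_ofReal.comp
      apply Measurable.sub (by fun_prop)
      exact Measurable.ite (measurableSet_le (by fun_prop) (by fun_prop)) (by fun_prop) (by fun_prop))
    (by simpa only [Complex.norm_real, Real.norm_eq_abs] using hintg)
  have b3 := b2.2
  simp only [Complex.norm_real, Real.norm_eq_abs] at b3
  have b4 := b3.trans (mul_le_mul_of_nonneg_left hle (by positivity : 0 ≤ (Cp + Cm) * M))
  calc _ ≤ |b₀| * p * s ^ (-Y) * tF p X + (Cp + Cm) * M * (K * s ^ (-Y) * tF p X) :=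
        add_le_add b1 b4
    _ = _ := by ring

end generator

section evolution

variable {Ω : Type*} [MeasurableSpace Ω] {P : Measure Ω} [IsProbabilityMeasure P]
  {Y Cp Cm M b₀ : ℝ} {q : ℝ → ℝ} {J : ℝ → Ω → ℝ}

lemma exp_psi_norm_le {ψ : ℝ → ℂ}
    (hJcf : ∀ h : ℝ, 0 < h → ∀ u : ℝ,
      ∫ ω, Complex.exp (Complex.I * u * J h ω) ∂P = Complex.exp (h * ψ u))
    {h : ℝ} (hh : 0 ≤ h) (u : ℝ) : ‖Complex.exp (h * ψ u)‖ ≤ 1 := by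
  rcases hh.eq_or_lt with h0 | h0
  · simp [← h0]
  · rw [← hJcf h h0 u]
    refine (norm_integral_le_of_norm_le_const (C := 1)
      (Eventually.of_forall fun ω => (norm_exp_I u (J h ω)).le)).trans ?_
    simp

lemma swap_cf {ψ : ℝ → ℂ} (hJmeas : ∀ h : ℝ, Measurable (J h))
    (hJcf : ∀ h : ℝ, 0 < h → ∀ u : ℝ,
      ∫ ω, Complex.exp (Complex.I * u * J h ω) ∂P = Complex.exp (h * ψ u))
    (m : Measure ℝ) [IsProbabilityMeasure m] {φ : ℝ → ℂ} (hφ : Integrable φ m)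
    (s x₀ : ℝ) {h : ℝ} (hh : 0 < h) :
    ∫ v : ℝ, φ v * Complex.exp (Complex.I * v * (-x₀ / s : ℝ)) * Complex.exp (h * ψ (v / s)) ∂m
      = ∫ ω, (∫ v : ℝ, φ v * Complex.exp (Complex.I * v * ((J h ω - x₀) / s : ℝ)) ∂m) ∂P := by
  have e1 : ∀ v : ℝ,
      φ v * Complex.exp (Complex.I * v * (-x₀ / s : ℝ)) * Complex.exp (h * ψ (v / s))
      = ∫ ω, φ v * Complex.exp (Complex.I * v * ((J h ω - x₀) / s : ℝ)) ∂P := by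
    intro v
    rw [← hJcf h hh, ← integral_const_mul]
    congr 1; ext ω
    rw [mul_assoc, ← Complex.exp_add]
    congr 2; push_cast; ring
  simp_rw [e1]
  rw [integral_integral_swap]
  have hJ := hJmeas h
  have h1 : Integrable (fun z : ℝ × Ω => φ z.1) (m.prod P) := hφ.comp_fst P
  exact h1.mul_bdd (c := 1) (by fun_prop)
    (Eventually.of_forall fun z => (norm_exp_I z.1 _).le)

lemma evolution_bound (hY1 : 1 < Y) (hY2 : Y < 2) (hCp : 0 < Cp) (hCm : 0 < Cm)
    (hqm : Measurable q) (hq : ∀ x, 0 ≤ q x) (hM : ∀ x, q x ≤ M)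
    (hJmeas : ∀ h : ℝ, Measurable (J h))
    (hJcf : ∀ h : ℝ, 0 < h → ∀ u : ℝ,
      ∫ ω, Complex.exp (Complex.I * u * J h ω) ∂P = Complex.exp (h * psiJ b₀ Y Cp Cm q u)) :
    ∃ K : ℝ, 0 ≤ K ∧ ∀ s : ℝ, 0 < s → s ≤ 1 → ∀ x₀ h : ℝ, 0 < h →
      ∫ ω, tF ((1 + Y) / 2) ((J h ω - x₀) / s) ∂P
        ≤ Real.exp (K * s ^ (-Y) * h) * tF ((1 + Y) / 2) (x₀ / s) ∧
      Real.exp (-(K * s ^ (-Y) * h)) * tF ((1 + Y) / 2) (x₀ / s)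
        ≤ ∫ ω, tF ((1 + Y) / 2) ((J h ω - x₀) / s) ∂P := by
  set p := (1 + Y) / 2 with hp
  have hp0 : 0 < p := by rw [hp]; linarith
  obtain ⟨m, hm1, hm2, hcf⟩ := exists_test_measure p hp0
  obtain ⟨K, hK, hKb⟩ := generator_bound (b₀ := b₀) hY1 hY2 hCp hCm hqm hq hM m hm2 hcf
  refine ⟨K, hK, fun s hs hs1 x₀ h hh => ?_⟩
  set ψ := psiJ b₀ Y Cp Cm q with hψ
  set A := K * s ^ (-Y) with hA
  have hψi : Integrable (fun v => ψ (v / s)) m :=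
    psiJ_scaled_integrable hY1 hY2 hCp hCm hqm hq hM m hm2 s
  have hψm : Measurable (fun v => ψ (v / s)) :=
    psiJ_measurable.comp (by fun_prop)
  have hmeas0 : ∀ (g : ℝ → ℂ), Measurable g → ∀ t : ℝ,
      AEStronglyMeasurable (fun v : ℝ => g v * Complex.exp (Complex.I * v * (-x₀ / s : ℝ)) *
        Complex.exp (t * ψ (v / s))) m := by
    intro g hg t
    refine Measurable.aestronglyMeasurable ?_
    refine Measurable.mul (hg.mul ?_) ((hψm.const_mul _).cexp)
    fun_prop
  -- the evolution and its derivative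
  set Uc : ℝ → ℂ := fun t => ∫ v : ℝ, (1:ℂ) * Complex.exp (Complex.I * v * (-x₀ / s : ℝ)) *
    Complex.exp (t * ψ (v / s)) ∂m with hUc
  set Dc : ℝ → ℂ := fun t => ∫ v : ℝ, ψ (v / s) * Complex.exp (Complex.I * v * (-x₀ / s : ℝ)) *
    Complex.exp (t * ψ (v / s)) ∂m with hDc
  set E : ℝ → ℝ := fun t => ∫ ω, tF p ((J t ω - x₀) / s) ∂P with hE
  have hUE : ∀ t, 0 < t → Uc t = (E t : ℂ) := by
    intro t ht
    have h1 := swap_cf hJmeas hJcf m (φ := fun _ => (1:ℂ)) (integrable_const _) s x₀ ht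
    rw [hUc]; simp only
    rw [h1, hE, ← integral_complex_ofReal]
    simp_rw [one_mul, hcf]
  have hU0 : Uc 0 = (tF p (x₀ / s) : ℂ) := by
    simp only [hUc, Complex.ofReal_zero, zero_mul, Complex.exp_zero, mul_one, one_mul, hcf]
    congr 1
    unfold tF; congr 2; ring
  have hFi : ∀ t, Integrable (fun ω => tF p ((J t ω - x₀) / s)) P := by
    intro t
    have hJ := hJmeas t
    refine Integrable.of_bound (C := 1)
      ((tF_measurable p).comp ((hJ.sub_const x₀).div_const s)).aestronglyMeasurable (Eventually.of_forall fun ω => ?_)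
    rw [Real.norm_eq_abs, abs_of_pos (tF_pos _ _)]
    exact Real.rpow_le_one_of_one_le_of_nonpos (by nlinarith [sq_nonneg ((J t ω - x₀) / s)]) (by linarith)
  have hDb : ∀ t, 0 < t → ‖Dc t‖ ≤ A * E t := by
    intro t ht
    have h1 := swap_cf hJmeas hJcf m hψi s x₀ ht
    rw [hDc]; simp only
    rw [h1, hE]; simp only
    rw [← integral_const_mul]
    refine norm_integral_le_of_norm_le ((hFi t).const_mul _) (Eventually.of_forall fun ω => ?_)
    exact hKb s hs hs1 _
  have hder : ∀ t, 0 < t → HasDerivAt Uc (Dc t) t := by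
    intro t ht
    refine (hasDerivAt_integral_of_dominated_loc_of_deriv_le (μ := m) (s := Ioi 0) (x₀ := t)
      (F := fun (t : ℝ) (v : ℝ) => (1:ℂ) * Complex.exp (Complex.I * v * (-x₀ / s : ℝ)) *
        Complex.exp (t * ψ (v / s)))
      (F' := fun (t : ℝ) (v : ℝ) => ψ (v / s) * Complex.exp (Complex.I * v * (-x₀ / s : ℝ)) *
        Complex.exp (t * ψ (v / s)))
      (bound := fun v => ‖ψ (v / s)‖) (Ioi_mem_nhds ht)
      (Eventually.of_forall fun t => hmeas0 _ measurable_const t) ?_ (hmeas0 _ hψm t) ?_ hψi.norm ?_).2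
    · refine Integrable.of_bound (C := 1) (hmeas0 _ measurable_const t) (Eventually.of_forall fun v => ?_)
      rw [one_mul, norm_mul, norm_exp_I, one_mul]
      exact exp_psi_norm_le hJcf ht.le _
    · refine Eventually.of_forall fun v t ht => ?_
      rw [norm_mul, norm_mul, norm_exp_I, mul_one]
      exact mul_le_of_le_one_right (norm_nonneg _) (exp_psi_norm_le hJcf (le_of_lt ht) _)
    · refine Eventually.of_forall fun v t ht => ?_
      have h2 : HasDerivAt (fun t : ℝ => (t : ℂ) * ψ (v / s)) (ψ (v / s)) t := by
        simpa using (Complex.ofRealCLM.hasDerivAt (x := t)).mul_const (ψ (v / s))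
      refine (h2.cexp.const_mul ((1:ℂ) * Complex.exp (Complex.I * v * (-x₀ / s : ℝ)))).congr_deriv ?_
      ring
  have hcont : ContinuousOn Uc (Ici 0) := by
    intro t ht
    refine continuousWithinAt_of_dominated (bound := fun _ => 1)
      (Eventually.of_forall fun t => hmeas0 _ measurable_const t) ?_ (integrable_const _) ?_
    · filter_upwards [self_mem_nhdsWithin] with t ht
      refine Eventually.of_forall fun v => ?_
      rw [one_mul, norm_mul, norm_exp_I, one_mul]
      exact exp_psi_norm_le hJcf ht _
    · refine Eventually.of_forall fun v => ?_
      apply Continuous.continuousWithinAt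
      fun_prop
  -- real part
  set U : ℝ → ℝ := fun t => (Uc t).re with hU
  have hUr : ∀ t, 0 < t → U t = E t := fun t ht => by simp [hU, hUE t ht]
  have hUr0 : U 0 = tF p (x₀ / s) := by simp [hU, hU0]
  have hUcont : ContinuousOn U (Ici 0) := Complex.continuous_re.comp_continuousOn hcont
  have hUder : ∀ t, 0 < t → HasDerivAt U (Dc t).re t := by
    intro t ht
    exact (Complex.reCLM.hasFDerivAt.comp_hasDerivAt t (hder t ht))
  have hDr : ∀ t, 0 < t → |(Dc t).re| ≤ A * U t := fun t ht => by
    rw [hUr t ht]; exact (Complex.abs_re_le_norm _).trans (hDb t ht)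
  have hE1 : ∀ c t : ℝ, HasDerivAt (fun t => Real.exp (c * t)) (Real.exp (c * t) * c) t := by
    intro c t
    simpa using ((hasDerivAt_id t).const_mul c).exp
  have anti : AntitoneOn (fun t => Real.exp (-A * t) * U t) (Ici 0) := by
    apply antitoneOn_of_deriv_nonpos (convex_Ici 0)
    · exact ContinuousOn.mul (by fun_prop) hUcont
    · intro t ht
      rw [interior_Ici] at ht
      exact ((hE1 (-A) t).mul (hUder t ht)).differentiableAt.differentiableWithinAt
    · intro t ht
      rw [interior_Ici] at ht
      have hd : HasDerivAt (fun t => Real.exp (-A * t) * U t)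
          (Real.exp (-A * t) * (-A) * U t + Real.exp (-A * t) * (Dc t).re) t :=
        (hE1 (-A) t).mul (hUder t ht)
      rw [hd.deriv]
      have := (abs_le.1 (hDr t ht)).2
      nlinarith [Real.exp_pos (-A * t)]
  have mono : MonotoneOn (fun t => Real.exp (A * t) * U t) (Ici 0) := by
    apply monotoneOn_of_deriv_nonneg (convex_Ici 0)
    · exact ContinuousOn.mul (by fun_prop) hUcont
    · intro t ht
      rw [interior_Ici] at ht
      exact ((hE1 A t).mul (hUder t ht)).differentiableAt.differentiableWithinAt
    · intro t ht
      rw [interior_Ici] at ht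
      have hd : HasDerivAt (fun t => Real.exp (A * t) * U t)
          (Real.exp (A * t) * A * U t + Real.exp (A * t) * (Dc t).re) t :=
        (hE1 A t).mul (hUder t ht)
      rw [hd.deriv]
      have := (abs_le.1 (hDr t ht)).1
      nlinarith [Real.exp_pos (A * t)]
  have r1 := anti (mem_Ici.2 le_rfl) (mem_Ici.2 hh.le) hh.le
  have r2 := mono (mem_Ici.2 le_rfl) (mem_Ici.2 hh.le) hh.le
  simp only [mul_zero, Real.exp_zero, one_mul, hUr0, hUr h hh] at r1 r2
  have p1 : Real.exp (A * h) * Real.exp (-A * h) = 1 := by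
    rw [← Real.exp_add]; simp
  constructor
  · calc E h = Real.exp (A * h) * (Real.exp (-A * h) * E h) := by rw [← mul_assoc, p1, one_mul]
      _ ≤ _ := by gcongr
  · calc _ ≤ Real.exp (-(A * h)) * (Real.exp (A * h) * E h) := by gcongr
      _ = E h := by rw [← mul_assoc, ← Real.exp_add]; simp

end evolution

section jumpBounds

variable {Ω : Type*} [MeasurableSpace Ω] {P : Measure Ω} [IsProbabilityMeasure P]

lemma tF_le_one {p : ℝ} (hp : 0 ≤ p) (x : ℝ) : tF p x ≤ 1 :=
  Real.rpow_le_one_of_one_le_of_nonpos (by nlinarith [sq_nonneg x]) (by linarith)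

lemma tF_comp_integrable {p : ℝ} (hp : 0 ≤ p) {X : Ω → ℝ} (hX : Measurable X) :
    Integrable (fun ω => tF p (X ω)) P := by
  refine Integrable.of_bound (C := 1) ((tF_measurable p).comp hX).aestronglyMeasurable
    (Eventually.of_forall fun ω => ?_)
  rw [Real.norm_eq_abs, abs_of_pos (tF_pos _ _)]
  exact tF_le_one hp _

lemma one_sub_tF_ge {p : ℝ} (hp : 1 ≤ p) {x : ℝ} (hx : |x| ≤ 2) : x ^ 2 / 5 ≤ 1 - tF p x := by
  have h1 : tF p x ≤ (1 + x ^ 2)⁻¹ := by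
    unfold tF
    rw [← Real.rpow_neg_one]
    exact Real.rpow_le_rpow_of_exponent_le (by nlinarith [sq_nonneg x]) (by linarith)
  have h2 : x ^ 2 ≤ 4 := by
    have := pow_le_pow_left₀ (abs_nonneg x) hx 2
    rw [sq_abs] at this; linarith
  have h3 : (1 + x ^ 2)⁻¹ ≤ 1 - x ^ 2 / 5 := by
    rw [inv_le_iff_one_le_mul₀ (by positivity)]
    nlinarith [sq_nonneg x]
  linarith

lemma second_moment_bound {Y K h s : ℝ} {X : Ω → ℝ} (hX : Measurable X) (hY : 1 < Y)
    (hs : 0 < s)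
    (hlow : Real.exp (-(K * s ^ (-Y) * h)) * tF ((1 + Y) / 2) (0 / s)
        ≤ ∫ ω, tF ((1 + Y) / 2) ((X ω - 0) / s) ∂P) :
    ∫ ω, (if |X ω| ≤ 2 * s then (X ω) ^ 2 else 0) ∂P ≤ 5 * K * (h * s ^ (2 - Y)) := by
  set p := (1 + Y) / 2 with hp
  have hp1 : 1 ≤ p := by rw [hp]; linarith
  have t0 : tF p (0 / s) = 1 := by simp [tF]
  have hX2 : Measurable (fun ω => (X ω - 0) / s) := (hX.sub_const 0).div_const s
  have hintg := tF_comp_integrable (P := P) (p := p) (by linarith) hX2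
  have e1 := Real.add_one_le_exp (-(K * s ^ (-Y) * h))
  rw [t0, mul_one] at hlow
  have h1 : ∫ ω, (1 - tF p ((X ω - 0) / s)) ∂P ≤ K * s ^ (-Y) * h := by
    rw [integral_sub (integrable_const _) hintg]
    simp only [integral_const, probReal_univ, one_smul]
    linarith
  have h2 : ∫ ω, (if |X ω| ≤ 2 * s then (X ω) ^ 2 else 0) ∂P
      ≤ ∫ ω, (5 * s ^ 2) * (1 - tF p ((X ω - 0) / s)) ∂P := by
    refine integral_mono_of_nonneg (Eventually.of_forall fun ω => ?_)
      (((integrable_const _).sub hintg).const_mul _) (Eventually.of_forall fun ω => ?_)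
    · show 0 ≤ ite _ _ _
      split_ifs <;> positivity
    · show ite _ _ _ ≤ _
      split_ifs with hc
      · have := one_sub_tF_ge hp1 (x := (X ω - 0) / s) (by
          rw [sub_zero, abs_div, abs_of_pos hs, div_le_iff₀ hs]; exact hc)
        calc X ω ^ 2 = 5 * s ^ 2 * (((X ω - 0) / s) ^ 2 / 5) := by
              field_simp; ring
          _ ≤ _ := mul_le_mul_of_nonneg_left this (by positivity)
      · have := tF_le_one (p := p) (by linarith) ((X ω - 0) / s)
        have : 0 ≤ 1 - tF p ((X ω - 0) / s) := by linarith
        positivity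
  rw [integral_const_mul] at h2
  calc _ ≤ _ := h2
    _ ≤ 5 * s ^ 2 * (K * s ^ (-Y) * h) := by gcongr
    _ = _ := by
      rw [sub_eq_add_neg, Real.rpow_add hs, Real.rpow_two]; ring

lemma small_ball_bound {Y K s x₀ : ℝ} {X : Ω → ℝ} (hX : Measurable X) (hY : 1 < Y)
    (hs : 0 < s) (hx₀ : x₀ ≠ 0)
    (hup : ∫ ω, tF ((1 + Y) / 2) ((X ω - x₀) / s) ∂P
        ≤ Real.exp K * tF ((1 + Y) / 2) (x₀ / s)) :
    P.real {ω | |X ω - x₀| ≤ s}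
      ≤ 2 ^ ((1 + Y) / 2) * Real.exp K * (s / |x₀|) ^ (1 + Y) := by
  set p := (1 + Y) / 2 with hp
  have hp1 : 1 ≤ p := by rw [hp]; linarith
  have hintg := tF_comp_integrable (P := P) (p := p) (by linarith) ((hX.sub_const x₀).div_const s)
  have hA : MeasurableSet {ω | |X ω - x₀| ≤ s} :=
    measurableSet_le (hX.sub_const x₀).abs measurable_const
  have h1 : P.real {ω | |X ω - x₀| ≤ s} ≤ ∫ ω, 2 ^ p * tF p ((X ω - x₀) / s) ∂P := by
    rw [← integral_indicator_one hA]
    refine integral_mono_of_nonneg (Eventually.of_forall fun ω => ?_)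
      (hintg.const_mul _) (Eventually.of_forall fun ω => ?_)
    · exact indicator_nonneg (fun _ _ => zero_le_one) _
    · by_cases hc : ω ∈ {ω | |X ω - x₀| ≤ s}
      · rw [indicator_of_mem hc]
        have hc' : |(X ω - x₀) / s| ≤ 1 := by
          rw [abs_div, abs_of_pos hs, div_le_iff₀ hs, one_mul]; exact hc
        have h2 := tF_le_of (p := p) (c := 2) (X := (X ω - x₀) / s) (Z := 0) (by linarith)
          (by norm_num) (by
            have := pow_le_pow_left₀ (abs_nonneg _) hc' 2
            rw [sq_abs] at this; nlinarith)
        simpa [tF] using h2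
      · rw [indicator_of_notMem hc]
        have := tF_pos p ((X ω - x₀) / s)
        positivity
  rw [integral_const_mul] at h1
  have hx : 0 < |x₀| := abs_pos.2 hx₀
  have h3 : tF p (x₀ / s) ≤ (s / |x₀|) ^ (1 + Y) := by
    unfold tF
    have e : (s / |x₀|) ^ (1 + Y) = ((x₀ / s) ^ 2) ^ (-p) := by
      rw [Real.rpow_neg (by positivity), ← Real.inv_rpow (by positivity), ← sq_abs (x₀ / s), abs_div, abs_of_pos hs,
        ← inv_pow, inv_div, ← Real.rpow_natCast, ← Real.rpow_mul (by positivity)]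
      congr 1; rw [hp]; push_cast; ring
    rw [e]
    exact Real.rpow_le_rpow_of_nonpos (by positivity) (by linarith) (by linarith)
  calc _ ≤ _ := h1
    _ ≤ 2 ^ p * (Real.exp K * (s / |x₀|) ^ (1 + Y)) := by
        have := hup.trans (mul_le_mul_of_nonneg_left h3 (Real.exp_pos K).le)
        gcongr
    _ = _ := by ring

/-- Covering a shell `||x| - ε| ≤ r` by small balls. -/
lemma shell_bound {Y s B ε r : ℝ} {X : Ω → ℝ} (hY : 1 < Y)
    (hs : 0 < s) (hε : 0 < ε) (hB : 0 ≤ B) (hr : 0 ≤ r) (hr2 : r ≤ ε / 2)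
    (hball : ∀ x₀ : ℝ, x₀ ≠ 0 → P.real {ω | |X ω - x₀| ≤ s} ≤ B * (s / |x₀|) ^ (1 + Y)) :
    P.real {ω | |(|X ω|) - ε| ≤ r}
      ≤ 2 * B * 2 ^ (1 + Y) * ((r + s) * s ^ Y * ε ^ (-1 - Y)) := by
  set N := ⌊r / s⌋₊ + 1 with hN
  -- centres `ε - r + (2 i + 1) s`, capped at `ε + r`
  set c : ℕ → ℝ := fun i => min (ε - r + (2 * i + 1) * s) (ε + r) with hc
  have hNr : r < N * s := by
    have := Nat.lt_floor_add_one (r / s)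
    rw [div_lt_iff₀ hs] at this
    rw [hN]; push_cast; exact this
  have hNr2 : (N : ℝ) ≤ (r + s) / s := by
    have := Nat.floor_le (div_nonneg hr hs.le)
    rw [hN, add_div, div_self hs.ne']; push_cast; linarith
  have hc1 : ∀ i, ε / 2 ≤ c i := by
    intro i
    refine le_min ?_ (by linarith)
    have : 0 ≤ (2 * (i:ℝ) + 1) * s := by positivity
    linarith
  have hcov : ∀ y : ℝ, |y - ε| ≤ r → ∃ i ∈ Finset.range N, |y - c i| ≤ s := by
    intro y hy
    rw [abs_le] at hy
    set z := y - (ε - r) with hz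
    have hz0 : 0 ≤ z := by rw [hz]; linarith
    have hz2 : z ≤ 2 * r := by rw [hz]; linarith
    set i := ⌊z / (2 * s)⌋₊ with hi
    have f1 : (i : ℝ) * (2 * s) ≤ z := by
      have := Nat.floor_le (div_nonneg hz0 (by positivity : 0 ≤ 2 * s))
      rwa [le_div_iff₀ (by positivity)] at this
    have f2 : z < ((i : ℝ) + 1) * (2 * s) := by
      have := Nat.lt_floor_add_one (z / (2 * s))
      rwa [div_lt_iff₀ (by positivity)] at this
    refine ⟨i, ?_, ?_⟩
    · rw [Finset.mem_range]
      have : (i : ℝ) < N := by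
        by_contra hcon
        push Not at hcon
        nlinarith
      exact_mod_cast this
    · rw [abs_le]
      simp only [hc]
      constructor
      · have := min_le_left (ε - r + (2 * (i:ℝ) + 1) * s) (ε + r)
        linarith
      · have : y - s ≤ min (ε - r + (2 * (i:ℝ) + 1) * s) (ε + r) :=
          le_min (by linarith) (by linarith)
        linarith
  have hsub : {ω | |(|X ω|) - ε| ≤ r} ⊆
      (⋃ i ∈ Finset.range N, {ω | |X ω - c i| ≤ s}) ∪
      (⋃ i ∈ Finset.range N, {ω | |X ω - (-c i)| ≤ s}) := by
    intro ω hω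
    obtain ⟨i, hi, hi2⟩ := hcov _ hω
    rcases le_total 0 (X ω) with h0 | h0
    · left
      rw [abs_of_nonneg h0] at hi2
      exact mem_biUnion (x := i) (by exact hi) hi2
    · right
      rw [abs_of_nonpos h0] at hi2
      refine mem_biUnion (x := i) (by exact hi) ?_
      show |X ω - (-c i)| ≤ s
      rw [← abs_neg]
      convert hi2 using 2; ring
  have hb : ∀ x₀ : ℝ, ε / 2 ≤ |x₀| →
      P.real {ω | |X ω - x₀| ≤ s} ≤ B * (s / (ε / 2)) ^ (1 + Y) := by
    intro x₀ hx
    have hx0 : 0 < |x₀| := lt_of_lt_of_le (by positivity) hx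
    refine (hball x₀ (abs_pos.1 hx0)).trans ?_
    gcongr
  have hsum : ∀ d : ℕ → ℝ, (∀ i, ε / 2 ≤ |d i|) →
      P.real (⋃ i ∈ Finset.range N, {ω | |X ω - d i| ≤ s}) ≤ N * (B * (s / (ε / 2)) ^ (1 + Y)) := by
    intro d hd
    refine (measureReal_biUnion_finset_le _ _).trans ?_
    refine (Finset.sum_le_sum fun i _ => hb (d i) (hd i)).trans ?_
    simp
  have h1 := hsum c (fun i => (hc1 i).trans (le_abs_self _))
  have h2 := hsum (fun i => -c i) (fun i => by rw [abs_neg]; exact (hc1 i).trans (le_abs_self _))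
  have h3 : P.real {ω | |(|X ω|) - ε| ≤ r} ≤ 2 * (N * (B * (s / (ε / 2)) ^ (1 + Y))) := by
    refine (measureReal_mono hsub (measure_ne_top _ _)).trans ((measureReal_union_le _ _).trans ?_)
    linarith
  refine h3.trans ?_
  calc _ ≤ 2 * ((r + s) / s * (B * (s / (ε / 2)) ^ (1 + Y))) := by gcongr
    _ = _ := by
      have e1 : (s / (ε / 2)) ^ (1 + Y) = 2 ^ (1 + Y) * (s * s ^ Y) * ε ^ (-1 - Y) := by
        have : s / (ε / 2) = 2 * s * ε⁻¹ := by field_simp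
        rw [this, Real.mul_rpow (by positivity) (by positivity),
          Real.mul_rpow (by positivity) hs.le, Real.inv_rpow hε.le, ← Real.rpow_neg hε.le,
          Real.rpow_add hs 1 Y, Real.rpow_one]
        congr 2; ring
      rw [e1]; field_simp

end jumpBounds

section mixed

variable {Ω : Type*} [MeasurableSpace Ω] {P : Measure Ω} [IsProbabilityMeasure P]
  {W X : Ω → ℝ}

/-- absolute Gaussian moments -/
def gMom (n : ℕ) : ℝ := ∫ w : ℝ, |w| ^ n ∂(gaussianReal 0 1)

lemma gMom_nonneg (n : ℕ) : 0 ≤ gMom n := integral_nonneg fun _ => by positivity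

lemma gauss_integrable (n : ℕ) : Integrable (fun w : ℝ => |w| ^ n) (gaussianReal 0 1) := by
  rcases Nat.eq_zero_or_pos n with rfl | hn
  · simp
  · have := (memLp_id_gaussianReal (μ := 0) (v := 1) (n : ℝ≥0))
    have h2 : MemLp (id : ℝ → ℝ) ((n : ℕ) : ℝ≥0∞) (gaussianReal 0 1) := by simpa using this
    simpa using h2.integrable_norm_pow hn.ne'

lemma W_integrable (hWm : Measurable W) (hW : P.map W = gaussianReal 0 1) (n : ℕ) :
    Integrable (fun ω => |W ω| ^ n) P := by
  have := gauss_integrable n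
  rw [← hW] at this
  exact this.comp_measurable hWm

lemma W_moment (hWm : Measurable W) (hW : P.map W = gaussianReal 0 1) (n : ℕ) :
    ∫ ω, |W ω| ^ n ∂P = gMom n := by
  unfold gMom
  rw [← hW, integral_map hWm.aemeasurable (by fun_prop)]

/-- the integrand -/
def fI (σ k ε : ℝ) (a b : ℕ) (w x : ℝ) : ℝ :=
  (k * w) ^ a * x ^ b * Set.indicator {x : ℝ | |x| ≤ ε} (fun _ => (1 : ℝ)) (σ * k * w + x)

lemma fI_measurable (σ k ε : ℝ) (a b : ℕ) : Measurable (fun z : ℝ × ℝ => fI σ k ε a b z.1 z.2) := by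
  unfold fI
  refine Measurable.mul (by fun_prop) ?_
  refine (measurable_const.indicator ?_).comp (g := Set.indicator {x : ℝ | |x| ≤ ε} (fun _ => (1 : ℝ))) (by fun_prop)
  exact measurableSet_le (by fun_prop) measurable_const

/-- constant in the tail bound -/
def tC (σ : ℝ) (b n : ℕ) : ℝ := (3 * σ) ^ b * (2 * σ) ^ n

/-- the tail part -/
def gT (σ k ε : ℝ) (a b n : ℕ) (w : ℝ) : ℝ :=
  tC σ b n * (k ^ (a + b) * (k / ε) ^ n) * |w| ^ (a + b + n)

lemma gT_nonneg {σ k ε : ℝ} (hσ : 0 < σ) (hk : 0 < k) (hε : 0 < ε) (a b n : ℕ) (w : ℝ) :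
    0 ≤ gT σ k ε a b n w := by unfold gT tC; positivity

lemma fI_tail {σ k ε : ℝ} (hσ : 0 < σ) (hk : 0 < k) (hε : 0 < ε) (a b n : ℕ) (w x : ℝ)
    (hw : ε / 2 < σ * k * |w|) : |fI σ k ε a b w x| ≤ gT σ k ε a b n w := by
  by_cases hx : σ * k * w + x ∈ {x : ℝ | |x| ≤ ε}
  · unfold fI
    rw [indicator_of_mem hx, mul_one, abs_mul, abs_pow, abs_pow, abs_mul, abs_of_pos hk]
    have hx' : |x| ≤ 3 * σ * (k * |w|) := by
      have e : x = (σ * k * w + x) - σ * k * w := by ring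
      have h1 : |σ * k * w| = σ * k * |w| := by
        rw [abs_mul, abs_mul, abs_of_pos hσ, abs_of_pos hk]
      have h2 := abs_sub (σ * k * w + x) (σ * k * w)
      rw [← e, h1] at h2
      have h3 : |σ * k * w + x| ≤ ε := hx
      linarith
    have h1 : 1 ≤ 2 * σ * (k / ε) * |w| := by
      rw [show 2 * σ * (k / ε) * |w| = (2 * (σ * k * |w|)) / ε by ring, le_div_iff₀ hε]
      linarith
    calc (k * |w|) ^ a * |x| ^ b ≤ (k * |w|) ^ a * (3 * σ * (k * |w|)) ^ b * 1 := by
          rw [mul_one]; gcongr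
      _ ≤ (k * |w|) ^ a * (3 * σ * (k * |w|)) ^ b * (2 * σ * (k / ε) * |w|) ^ n := by
          gcongr; exact one_le_pow₀ h1
      _ = _ := by unfold gT tC; ring
  · unfold fI
    rw [indicator_of_notMem hx, mul_zero, abs_zero]
    exact gT_nonneg hσ hk hε a b n w

lemma fI_main {σ k ε : ℝ} (hσ : 0 < σ) (hk : 0 < k) (hε : 0 < ε) (a b : ℕ) (w x : ℝ)
    (hw : σ * k * |w| ≤ ε / 2) :
    |fI σ k ε a b w x| ≤ (k ^ a * |w| ^ a) * (if |x| ≤ 2 * ε then |x| ^ b else 0) := by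
  by_cases hx : σ * k * w + x ∈ {x : ℝ | |x| ≤ ε}
  · unfold fI
    rw [indicator_of_mem hx, mul_one, abs_mul, abs_pow, abs_pow, abs_mul, abs_of_pos hk]
    have h1 : |σ * k * w| = σ * k * |w| := by
      rw [abs_mul, abs_mul, abs_of_pos hσ, abs_of_pos hk]
    have h2 := abs_sub (σ * k * w + x) (σ * k * w)
    rw [add_sub_cancel_left, h1] at h2
    have h3 : |σ * k * w + x| ≤ ε := hx
    rw [if_pos (by linarith), mul_pow]
  · unfold fI
    rw [indicator_of_notMem hx, mul_zero, abs_zero]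
    split_ifs <;> positivity

/-- First bound, without using cancellation. -/
lemma fI_bound_even (hWm : Measurable W) (hW : P.map W = gaussianReal 0 1) (hX : Measurable X)
    (hind : IndepFun W X P) {σ k ε : ℝ} (hσ : 0 < σ) (hk : 0 < k) (hε : 0 < ε) (a b n : ℕ) :
    |∫ ω, fI σ k ε a b (W ω) (X ω) ∂P| ≤
      k ^ a * gMom a * (∫ ω, (if |X ω| ≤ 2 * ε then |X ω| ^ b else 0) ∂P)
      + tC σ b n * (k ^ (a + b) * (k / ε) ^ n) * gMom (a + b + n) := by
  have mX : Measurable (fun x : ℝ => if |x| ≤ 2 * ε then |x| ^ b else 0) :=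
    Measurable.ite (measurableSet_le (by fun_prop) measurable_const) (by fun_prop) measurable_const
  have iX : Integrable (fun ω => if |X ω| ≤ 2 * ε then |X ω| ^ b else 0) P := by
    refine Integrable.of_bound (C := (2 * ε) ^ b) (mX.comp hX).aestronglyMeasurable
      (Eventually.of_forall fun ω => ?_)
    split_ifs with hc
    · rw [Real.norm_eq_abs, abs_pow, abs_abs]; gcongr
    · simp; positivity
  have iW : Integrable (fun ω => k ^ a * |W ω| ^ a) P := (W_integrable hWm hW a).const_mul _
  have hind2 : IndepFun (fun ω => k ^ a * |W ω| ^ a)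
      (fun ω => if |X ω| ≤ 2 * ε then |X ω| ^ b else 0) P :=
    hind.comp (φ := fun w => k ^ a * |w| ^ a) (ψ := fun x => if |x| ≤ 2 * ε then |x| ^ b else 0)
      (by fun_prop) mX
  have i1 : Integrable (fun ω => (k ^ a * |W ω| ^ a) * (if |X ω| ≤ 2 * ε then |X ω| ^ b else 0)) P :=
    hind2.integrable_mul iW iX
  have i2 : Integrable (fun ω => gT σ k ε a b n (W ω)) P :=
    (W_integrable hWm hW (a + b + n)).const_mul _
  have h1 : |∫ ω, fI σ k ε a b (W ω) (X ω) ∂P| ≤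
      ∫ ω, ((k ^ a * |W ω| ^ a) * (if |X ω| ≤ 2 * ε then |X ω| ^ b else 0)
        + gT σ k ε a b n (W ω)) ∂P := by
    rw [← Real.norm_eq_abs]
    refine norm_integral_le_of_norm_le (i1.add i2) (Eventually.of_forall fun ω => ?_)
    rw [Real.norm_eq_abs]
    rcases le_or_gt (σ * k * |W ω|) (ε / 2) with hw | hw
    · have := fI_main hσ hk hε a b (W ω) (X ω) hw
      have := gT_nonneg hσ hk hε a b n (W ω)
      linarith
    · have := fI_tail hσ hk hε a b n (W ω) (X ω) hw
      have : 0 ≤ (k ^ a * |W ω| ^ a) * (if |X ω| ≤ 2 * ε then |X ω| ^ b else 0) := by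
        split_ifs <;> positivity
      linarith
  refine h1.trans (le_of_eq ?_)
  rw [integral_add i1 i2, hind2.integral_fun_mul_eq_mul_integral iW.aestronglyMeasurable
    iX.aestronglyMeasurable, integral_const_mul, W_moment hWm hW]
  unfold gT
  rw [integral_const_mul, W_moment hWm hW]

/-- the subtracted symmetric part -/
def tS (σ k ε : ℝ) (a b : ℕ) (w x : ℝ) : ℝ :=
  (if σ * k * |w| ≤ ε / 2 then (k * w) ^ a else 0) * (if |x| ≤ ε then x ^ b else 0)

/-- the shell part -/
def gS (σ k ε : ℝ) (a b : ℕ) (w x : ℝ) : ℝ :=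
  k ^ a * |w| ^ a * (2 * ε) ^ b *
    (if σ * k * |w| ≤ ε / 2 ∧ |(|x|) - ε| ≤ σ * k * |w| then 1 else 0)

lemma fI_sub_tS {σ k ε : ℝ} (hσ : 0 < σ) (hk : 0 < k) (hε : 0 < ε) (a b n : ℕ) (w x : ℝ) :
    |fI σ k ε a b w x - tS σ k ε a b w x| ≤ gS σ k ε a b w x + gT σ k ε a b n w := by
  have hS : 0 ≤ gS σ k ε a b w x := by unfold gS; split_ifs <;> positivity
  have hT := gT_nonneg hσ hk hε a b n w
  rcases le_or_gt (σ * k * |w|) (ε / 2) with hw | hw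
  · have h1 : |σ * k * w| = σ * k * |w| := by
      rw [abs_mul, abs_mul, abs_of_pos hσ, abs_of_pos hk]
    have h2 := abs_sub (σ * k * w + x) (σ * k * w)
    rw [add_sub_cancel_left, h1] at h2
    have h3 := abs_add_le (σ * k * w) x
    rw [h1] at h3
    suffices hh : |fI σ k ε a b w x - tS σ k ε a b w x| ≤ gS σ k ε a b w x by linarith
    have key : (k * |w|) ^ a * |x| ^ b ≤ k ^ a * |w| ^ a * (2 * ε) ^ b * 1 ∨ 2 * ε < |x| := by
      rcases le_or_gt (|x|) (2 * ε) with h | h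
      · left; rw [mul_one, mul_pow]; gcongr
      · right; exact h
    unfold fI tS gS
    rw [if_pos hw]
    by_cases hx : |σ * k * w + x| ≤ ε
    · rw [indicator_of_mem (by exact hx), mul_one]
      by_cases hx2 : |x| ≤ ε
      · rw [if_pos hx2, sub_self, abs_zero]
        split_ifs <;> positivity
      · rw [if_neg hx2, mul_zero, sub_zero, abs_mul, abs_pow, abs_pow, abs_mul, abs_of_pos hk]
        rw [if_pos ⟨hw, by rw [abs_of_pos (by linarith)]; linarith⟩]
        rcases key with h | h
        · exact h
        · linarith
    · rw [indicator_of_notMem (by exact hx), mul_zero, zero_sub, abs_neg]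
      by_cases hx2 : |x| ≤ ε
      · rw [if_pos hx2, abs_mul, abs_pow, abs_pow, abs_mul, abs_of_pos hk]
        rw [if_pos ⟨hw, by rw [abs_of_nonpos (by linarith)]; linarith⟩]
        rcases key with h | h
        · exact h
        · linarith
      · rw [if_neg hx2, mul_zero, abs_zero]
        split_ifs <;> positivity
  · have : tS σ k ε a b w x = 0 := by
      unfold tS; rw [if_neg (not_le.2 hw), zero_mul]
    rw [this, sub_zero]
    have := fI_tail hσ hk hε a b n w x hw
    linarith

lemma odd_zero (σ k ε : ℝ) {a : ℕ} (ha : Odd a) :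
    ∫ w : ℝ, (if σ * k * |w| ≤ ε / 2 then (k * w) ^ a else 0) ∂(gaussianReal 0 1) = 0 := by
  set f : ℝ → ℝ := fun w => if σ * k * |w| ≤ ε / 2 then (k * w) ^ a else 0 with hf
  have h1 : ∫ w, f w ∂(gaussianReal 0 1) = ∫ w, f (-w) ∂(gaussianReal 0 1) := by
    have hm := gaussianReal_map_neg (μ := 0) (v := 1)
    rw [neg_zero] at hm
    conv_lhs => rw [← hm]
    exact integral_map_equiv (MeasurableEquiv.neg ℝ) f
  have h2 : ∀ w, f (-w) = - f w := by
    intro w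
    simp only [hf, abs_neg]
    split_ifs
    · rw [mul_neg, ha.neg_pow]
    · simp
  simp_rw [h2] at h1
  rw [integral_neg] at h1
  linarith

/-- Second bound, using the symmetry of `W`. -/
lemma fI_bound_odd (hWm : Measurable W) (hW : P.map W = gaussianReal 0 1) (hX : Measurable X)
    (hind : IndepFun W X P) {σ k ε D : ℝ} (hσ : 0 < σ) (hk : 0 < k) (hε : 0 < ε) (hD : 0 ≤ D)
    {a : ℕ} (ha : Odd a) (b n : ℕ)
    (hshell : ∀ r : ℝ, 0 ≤ r → r ≤ ε / 2 → P.real {ω | |(|X ω|) - ε| ≤ r} ≤ D * (r + k)) :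
    |∫ ω, fI σ k ε a b (W ω) (X ω) ∂P| ≤
      k ^ (a + 1) * (2 * ε) ^ b * D * (σ * gMom (a + 1) + gMom a)
      + tC σ b n * (k ^ (a + b) * (k / ε) ^ n) * gMom (a + b + n) := by
  have mw : Measurable (fun w : ℝ => if σ * k * |w| ≤ ε / 2 then (k * w) ^ a else 0) :=
    Measurable.ite (measurableSet_le (by fun_prop) measurable_const) (by fun_prop) measurable_const
  have mx : Measurable (fun x : ℝ => if |x| ≤ ε then x ^ b else 0) :=
    Measurable.ite (measurableSet_le (by fun_prop) measurable_const) (by fun_prop) measurable_const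
  have iW : Integrable (fun ω => if σ * k * |W ω| ≤ ε / 2 then (k * W ω) ^ a else 0) P := by
    refine ((W_integrable hWm hW a).const_mul (k ^ a)).mono' (mw.comp hWm).aestronglyMeasurable
      (Eventually.of_forall fun ω => ?_)
    split_ifs
    · rw [Real.norm_eq_abs, abs_pow, abs_mul, abs_of_pos hk, mul_pow]
    · simp; positivity
  have iX : Integrable (fun ω => if |X ω| ≤ ε then (X ω) ^ b else 0) P := by
    refine Integrable.of_bound (C := ε ^ b) (mx.comp hX).aestronglyMeasurable
      (Eventually.of_forall fun ω => ?_)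
    split_ifs with hc
    · rw [Real.norm_eq_abs, abs_pow]; gcongr
    · simp; positivity
  have hind2 : IndepFun (fun ω => if σ * k * |W ω| ≤ ε / 2 then (k * W ω) ^ a else 0)
      (fun ω => if |X ω| ≤ ε then (X ω) ^ b else 0) P :=
    hind.comp (φ := fun w => if σ * k * |w| ≤ ε / 2 then (k * w) ^ a else 0)
      (ψ := fun x => if |x| ≤ ε then x ^ b else 0) mw mx
  have iS : Integrable (fun ω => tS σ k ε a b (W ω) (X ω)) P := hind2.integrable_mul iW iX
  have zS : ∫ ω, tS σ k ε a b (W ω) (X ω) ∂P = 0 := by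
    unfold tS
    rw [hind2.integral_fun_mul_eq_mul_integral iW.aestronglyMeasurable iX.aestronglyMeasurable]
    have : ∫ ω, (if σ * k * |W ω| ≤ ε / 2 then (k * W ω) ^ a else 0) ∂P = 0 := by
      have h0 := integral_map hWm.aemeasurable (μ := P)
        (f := fun w : ℝ => if σ * k * |w| ≤ ε / 2 then (k * w) ^ a else 0) mw.aestronglyMeasurable
      rw [hW, odd_zero σ k ε ha] at h0
      exact h0.symm
    rw [this, zero_mul]
  -- the shell part
  have mg : Measurable (fun z : ℝ × ℝ => gS σ k ε a b z.1 z.2) := by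
    unfold gS
    refine Measurable.mul (by fun_prop) (Measurable.ite ?_ measurable_const measurable_const)
    have m1 : Measurable (fun z : ℝ × ℝ => σ * k * |z.1|) := by fun_prop
    have m2 : Measurable (fun z : ℝ × ℝ => |(|z.2|) - ε|) := by fun_prop
    exact (measurableSet_le m1 measurable_const).inter (measurableSet_le m2 m1)
  have gle : ∀ w x, ‖gS σ k ε a b w x‖ ≤ k ^ a * (2 * ε) ^ b * |w| ^ a := by
    intro w x
    unfold gS
    split_ifs
    · rw [Real.norm_eq_abs, abs_of_nonneg (by positivity)]; apply le_of_eq; ring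
    · simp; positivity
  have ig : Integrable (fun ω => gS σ k ε a b (W ω) (X ω)) P := by
    refine ((W_integrable hWm hW a).const_mul (k ^ a * (2 * ε) ^ b)).mono'
      (mg.comp (hWm.prodMk hX)).aestronglyMeasurable (Eventually.of_forall fun ω => gle _ _)
  have hmap := (indepFun_iff_map_prod_eq_prod_map_map hWm.aemeasurable hX.aemeasurable).1 hind
  rw [hW] at hmap
  have : IsProbabilityMeasure (P.map X) := Measure.isProbabilityMeasure_map hX.aemeasurable
  have ig2 : Integrable (fun z : ℝ × ℝ => gS σ k ε a b z.1 z.2) ((gaussianReal 0 1).prod (P.map X)) := by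
    rw [← hmap]
    exact (integrable_map_measure mg.aestronglyMeasurable (hWm.prodMk hX).aemeasurable).2 ig
  have hgS : ∫ ω, gS σ k ε a b (W ω) (X ω) ∂P ≤
      k ^ (a + 1) * (2 * ε) ^ b * D * (σ * gMom (a + 1) + gMom a) := by
    have e1 : ∫ ω, gS σ k ε a b (W ω) (X ω) ∂P
        = ∫ z : ℝ × ℝ, gS σ k ε a b z.1 z.2 ∂((gaussianReal 0 1).prod (P.map X)) := by
      rw [← hmap, integral_map (hWm.prodMk hX).aemeasurable mg.aestronglyMeasurable]
    rw [e1, integral_prod _ ig2]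
    have iR : Integrable (fun w : ℝ => k ^ (a + 1) * (2 * ε) ^ b * D * (σ * |w| ^ (a + 1) + |w| ^ a))
        (gaussianReal 0 1) :=
      (((gauss_integrable (a + 1)).const_mul σ).add (gauss_integrable a)).const_mul _
    refine (integral_mono_of_nonneg (g := fun w : ℝ => k ^ (a + 1) * (2 * ε) ^ b * D *
        (σ * |w| ^ (a + 1) + |w| ^ a)) (Eventually.of_forall fun w => ?_) iR
        (Eventually.of_forall fun w => ?_)).trans (le_of_eq ?_)
    · refine integral_nonneg fun x => ?_
      show 0 ≤ gS _ _ _ _ _ _ _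
      unfold gS; split_ifs <;> positivity
    · show ∫ x, gS σ k ε a b w x ∂(P.map X) ≤ _
      unfold gS
      rw [integral_const_mul]
      rcases le_or_gt (σ * k * |w|) (ε / 2) with hw | hw
      · have hr := hshell (σ * k * |w|) (by positivity) hw
        have hmS : MeasurableSet {x : ℝ | |(|x|) - ε| ≤ σ * k * |w|} :=
          measurableSet_le (by fun_prop) measurable_const
        have e2 : ∫ x : ℝ, (if σ * k * |w| ≤ ε / 2 ∧ |(|x|) - ε| ≤ σ * k * |w| then (1:ℝ) else 0)
            ∂(P.map X) = P.real {ω | |(|X ω|) - ε| ≤ σ * k * |w|} := by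
          have : (fun x : ℝ => (if σ * k * |w| ≤ ε / 2 ∧ |(|x|) - ε| ≤ σ * k * |w| then (1:ℝ) else 0))
              = Set.indicator {x : ℝ | |(|x|) - ε| ≤ σ * k * |w|} 1 := by
            ext x
            simp [hw, indicator_apply]
          rw [this, integral_indicator_one hmS, map_measureReal_apply hX hmS]
          rfl
        rw [e2]
        calc _ ≤ k ^ a * |w| ^ a * (2 * ε) ^ b * (D * (σ * k * |w| + k)) := by gcongr
          _ = _ := by ring
      · have : ∀ x : ℝ, ¬ (σ * k * |w| ≤ ε / 2 ∧ |(|x|) - ε| ≤ σ * k * |w|) :=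
          fun x h => absurd h.1 (not_le.2 hw)
        simp only [this, if_false, integral_zero, mul_zero]
        positivity
    · rw [integral_const_mul, integral_add ((gauss_integrable (a + 1)).const_mul σ)
        (gauss_integrable a), integral_const_mul]
      rfl
  have iT : Integrable (fun ω => gT σ k ε a b n (W ω)) P :=
    (W_integrable hWm hW (a + b + n)).const_mul _
  have mf : AEStronglyMeasurable (fun ω => fI σ k ε a b (W ω) (X ω)) P :=
    ((fI_measurable σ k ε a b).comp (hWm.prodMk hX)).aestronglyMeasurable
  have idf : Integrable (fun ω => fI σ k ε a b (W ω) (X ω) - tS σ k ε a b (W ω) (X ω)) P :=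
    (ig.add iT).mono' (mf.sub iS.aestronglyMeasurable)
      (Eventually.of_forall fun ω => fI_sub_tS hσ hk hε a b n _ _)
  have e3 : ∫ ω, fI σ k ε a b (W ω) (X ω) ∂P
      = ∫ ω, (fI σ k ε a b (W ω) (X ω) - tS σ k ε a b (W ω) (X ω)) ∂P := by
    have := integral_add idf iS
    simp only [sub_add_cancel] at this
    rw [this, zS, add_zero]
  rw [e3, ← Real.norm_eq_abs]
  refine (norm_integral_le_of_norm_le (ig.add iT)
      (Eventually.of_forall fun ω => fI_sub_tS hσ hk hε a b n _ _)).trans ?_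
  have e4 := integral_add ig iT
  have e5 : ∫ ω, gT σ k ε a b n (W ω) ∂P =
      tC σ b n * (k ^ (a + b) * (k / ε) ^ n) * gMom (a + b + n) := by
    unfold gT
    rw [integral_const_mul, W_moment hWm hW]
  refine (le_of_eq e4).trans ?_
  rw [e5]
  linarith

end mixed

section final

variable {Ω : Type*} [MeasurableSpace Ω] {P : Measure Ω} [IsProbabilityMeasure P]
  {Y Cp Cm M b₀ : ℝ} {q : ℝ → ℝ} {J : ℝ → Ω → ℝ}

lemma jump_bounds (hY1 : 1 < Y) (hY2 : Y < 2) (hCp : 0 < Cp) (hCm : 0 < Cm)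
    (hqm : Measurable q) (hq : ∀ x, 0 ≤ q x) (hM : ∀ x, q x ≤ M)
    (hJmeas : ∀ h : ℝ, Measurable (J h))
    (hJcf : ∀ h : ℝ, 0 < h → ∀ u : ℝ,
      ∫ ω, Complex.exp (Complex.I * u * J h ω) ∂P = Complex.exp (h * psiJ b₀ Y Cp Cm q u)) :
    ∃ C : ℝ, 0 < C ∧ ∀ h : ℝ, 0 < h → h ≤ 1 → ∀ ε : ℝ, 0 < ε → ε ≤ 1 →
      ∫ ω, (if |J h ω| ≤ 2 * ε then (J h ω) ^ 2 else 0) ∂P ≤ C * (h * ε ^ (2 - Y)) ∧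
      ∀ r : ℝ, 0 ≤ r → r ≤ ε / 2 →
        P.real {ω | |(|J h ω|) - ε| ≤ r} ≤ C * h * ε ^ (-1 - Y) * (r + Real.sqrt h) := by
  obtain ⟨K, hK, hKb⟩ := evolution_bound (b₀ := b₀) hY1 hY2 hCp hCm hqm hq hM hJmeas hJcf
  set B := 2 ^ ((1 + Y) / 2) * Real.exp K with hB
  have hB0 : 0 < B := by positivity
  set C := 5 * K + 2 * B * 2 ^ (1 + Y) with hC
  refine ⟨C, by positivity, fun h hh hh1 ε hε hε1 => ⟨?_, fun r hr hr2 => ?_⟩⟩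
  · refine (second_moment_bound (hJmeas h) hY1 hε (hKb ε hε hε1 0 h hh).2).trans ?_
    have : 0 ≤ h * ε ^ (2 - Y) := by positivity
    have : 5 * K ≤ C := by rw [hC]; have : 0 ≤ 2 * B * 2 ^ (1 + Y) := by positivity
                           linarith
    gcongr
  · set s := h ^ (1 / Y) with hs
    have hs0 : 0 < s := Real.rpow_pos_of_pos hh _
    have hY0 : 0 < Y := by linarith
    have hs1 : s ≤ 1 := Real.rpow_le_one hh.le hh1 (by positivity)
    have hsY : s ^ Y = h := by
      rw [hs, ← Real.rpow_mul hh.le]; field_simp; simp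
    have hsk : s ≤ Real.sqrt h := by
      rw [Real.sqrt_eq_rpow, hs]
      exact Real.rpow_le_rpow_of_exponent_ge hh hh1 (one_div_le_one_div_of_le hY0 hY2.le)
    have hball : ∀ x₀ : ℝ, x₀ ≠ 0 →
        P.real {ω | |J h ω - x₀| ≤ s} ≤ B * (s / |x₀|) ^ (1 + Y) := by
      intro x₀ hx
      refine small_ball_bound (hJmeas h) hY1 hs0 hx ?_
      have h1 := (hKb s hs0 hs1 x₀ h hh).1
      have e : K * s ^ (-Y) * h = K := by
        rw [Real.rpow_neg hs0.le, hsY]; field_simp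
      rwa [e] at h1
    refine (shell_bound hY1 hs0 hε hB0.le hr hr2 hball).trans ?_
    rw [hsY]
    have : 2 * B * 2 ^ (1 + Y) ≤ C := by rw [hC]; linarith
    calc _ ≤ C * ((r + Real.sqrt h) * h * ε ^ (-1 - Y)) := by gcongr
      _ = _ := by ring

variable {X : Ω → ℝ}

lemma trunc_integrable (hX : Measurable X) (ε : ℝ) (b : ℕ) :
    Integrable (fun ω => if |X ω| ≤ 2 * ε then |X ω| ^ b else 0) P := by
  have mX : Measurable (fun x : ℝ => if |x| ≤ 2 * ε then |x| ^ b else 0) :=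
    Measurable.ite (measurableSet_le (by fun_prop) measurable_const) (by fun_prop) measurable_const
  refine Integrable.of_bound (C := |2 * ε| ^ b) (mX.comp hX).aestronglyMeasurable
    (Eventually.of_forall fun ω => ?_)
  split_ifs with hc
  · rw [Real.norm_eq_abs, abs_pow, abs_abs]; exact pow_le_pow_left₀ (abs_nonneg _) (hc.trans (le_abs_self _)) _
  · simp

lemma trunc_two (hX : Measurable X) {ε V : ℝ} (hε : 0 < ε) {b : ℕ} (hb : 2 ≤ b)
    (hV : ∫ ω, (if |X ω| ≤ 2 * ε then (X ω) ^ 2 else 0) ∂P ≤ V) :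
    ∫ ω, (if |X ω| ≤ 2 * ε then |X ω| ^ b else 0) ∂P ≤ (2 * ε) ^ (b - 2) * V := by
  have i2 := trunc_integrable (P := P) hX ε 2
  simp only [sq_abs] at i2
  calc _ ≤ ∫ ω, (2 * ε) ^ (b - 2) * (if |X ω| ≤ 2 * ε then (X ω) ^ 2 else 0) ∂P := by
        refine integral_mono (trunc_integrable hX ε b) (i2.const_mul _) fun ω => ?_
        dsimp only
        split_ifs with hc
        · rw [← sq_abs (X ω)]
          calc |X ω| ^ b = |X ω| ^ (b - 2) * |X ω| ^ 2 := by rw [← pow_add]; congr 1; omega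
            _ ≤ _ := by gcongr
        · simp
    _ ≤ _ := by rw [integral_const_mul]; gcongr

lemma trunc_one (hX : Measurable X) {ε t : ℝ} (hε : 0 < ε) {b : ℕ} (hb : 1 ≤ b) (ht : 0 < t)
    (hV : ∫ ω, (if |X ω| ≤ 2 * ε then (X ω) ^ 2 else 0) ∂P ≤ t ^ 2) :
    ∫ ω, (if |X ω| ≤ 2 * ε then |X ω| ^ b else 0) ∂P ≤ (2 * ε) ^ (b - 1) * t := by
  have i2 := trunc_integrable (P := P) hX ε 2
  simp only [sq_abs] at i2
  calc _ ≤ ∫ ω, (2 * ε) ^ (b - 1) * (t / 2 +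
        (1 / (2 * t)) * (if |X ω| ≤ 2 * ε then (X ω) ^ 2 else 0)) ∂P := by
        refine integral_mono (trunc_integrable hX ε b)
          (((integrable_const _).add (i2.const_mul _)).const_mul _) fun ω => ?_
        dsimp only
        split_ifs with hc
        · rw [← sq_abs (X ω)]
          have h1 : |X ω| ≤ t / 2 + 1 / (2 * t) * |X ω| ^ 2 := by
            have : t / 2 + 1 / (2 * t) * |X ω| ^ 2 - |X ω| = (t - |X ω|) ^ 2 / (2 * t) := by
              field_simp; ring
            have h2 : 0 ≤ (t - |X ω|) ^ 2 / (2 * t) := by positivity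
            linarith
          calc |X ω| ^ b = |X ω| ^ (b - 1) * |X ω| := by rw [← pow_succ]; congr 1; omega
            _ ≤ _ := by gcongr
        · rw [mul_zero, add_zero]; positivity
    _ ≤ _ := by
        rw [integral_const_mul, integral_add (integrable_const _) (i2.const_mul _),
          integral_const_mul]
        simp only [integral_const, probReal_univ, one_smul]
        gcongr
        calc _ ≤ t / 2 + 1 / (2 * t) * t ^ 2 := by gcongr
          _ = t := by field_simp; ring

end final

/-- Lemma C.6: estimates for the truncated mixed moments
`E(W_h^a J_h^b 1_{|σW_h + J_h| ≤ ε})`, depending on the parities of `a` and `b`. -/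
theorem truncated_mixed_moments
    {Ω : Type*} [MeasurableSpace Ω] (P : Measure Ω) [IsProbabilityMeasure P]
    (Y Cp Cm σ b₀ : ℝ) (q : ℝ → ℝ)
    (hY1 : 1 < Y) (hY2 : Y < 2)
    (hCp : 0 < Cp) (hCm : 0 < Cm) (hσ : 0 < σ)
    (hq_meas : Measurable q) (hq_nonneg : ∀ x, 0 ≤ q x)
    (hq_bdd : ∃ M : ℝ, ∀ x, q x ≤ M)
    (hq_lim : Tendsto q (𝓝[≠] (0 : ℝ)) (𝓝 1))
    (hq_taylor : ∃ αp αm : ℝ, αp ≠ 0 ∧ αm ≠ 0 ∧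
      IntegrableOn (fun x => |q x - 1 - αp * x| * x ^ (-Y - 1)) (Set.Ioc (0 : ℝ) 1) ∧
      IntegrableOn (fun x => |q x - 1 - αm * x| * |x| ^ (-Y - 1)) (Set.Ico (-1 : ℝ) 0))
    (hq_log : ∃ K M : ℝ, ∀ x : ℝ, M ≤ |x| → |Real.log (q x)| ≤ K * |x|)
    (hq_inf : ∀ ε : ℝ, 0 < ε → ∃ c : ℝ, 0 < c ∧ ∀ x : ℝ, x ≠ 0 → |x| < ε → c ≤ q x)
    (hq_sq : IntegrableOn (fun x => q x ^ 2 * |x| ^ (-1 - Y)) {x : ℝ | 1 < |x|})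
    -- the jump part `J` and the Brownian part `W`
    (J : ℝ → Ω → ℝ) (W : Ω → ℝ)
    (hWmeas : Measurable W) (hW : P.map W = gaussianReal 0 1)
    (hJmeas : ∀ h : ℝ, Measurable (J h))
    (hJcf : ∀ h : ℝ, 0 < h → ∀ u : ℝ,
      ∫ ω, Complex.exp (Complex.I * u * J h ω) ∂P = Complex.exp (h * psiJ b₀ Y Cp Cm q u))
    (hindep : ∀ h : ℝ, 0 < h → IndepFun W (J h) P)
    (a b : ℕ) (ha : 1 ≤ a) (hb : 1 ≤ b)
    -- the threshold `ε = ε(h)`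
    (ε : ℝ → ℝ) (hεpos : ∀ h : ℝ, 0 < h → 0 < ε h)
    (hε0 : Tendsto ε (𝓝[>] (0 : ℝ)) (𝓝 0))
    (δbar : ℝ) (hδ1 : 0 < δbar) (hδ2 : δbar < 1 / 2)
    (hεlow : ∀ᶠ h in 𝓝[>] (0 : ℝ), h ^ (1 / 2 - δbar) ≤ ε h) :
    (Odd a →
      ∃ R₁ R₂ : ℝ → ℝ,
        (∀ h : ℝ, 0 < h →
          (∫ ω, (Real.sqrt h * W ω) ^ a * (J h ω) ^ b *
              Set.indicator {x : ℝ | |x| ≤ ε h} (fun _ => (1 : ℝ))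
                (σ * Real.sqrt h * W ω + J h ω) ∂P) = R₁ h + R₂ h) ∧
        R₁ =O[𝓝[>] (0 : ℝ)] (fun h => h ^ 2 * ε h ^ ((a : ℝ) + b - Y - 2)) ∧
        R₂ =O[𝓝[>] (0 : ℝ)] (fun h => h ^ (1 + (a : ℝ) / 2) * ε h ^ ((b : ℝ) - Y / 2))) ∧
    (Even a → Even b →
      ∃ R₁ R₂ : ℝ → ℝ,
        (∀ h : ℝ, 0 < h →
          (∫ ω, (Real.sqrt h * W ω) ^ a * (J h ω) ^ b *
              Set.indicator {x : ℝ | |x| ≤ ε h} (fun _ => (1 : ℝ))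
                (σ * Real.sqrt h * W ω + J h ω) ∂P) = R₁ h + R₂ h) ∧
        R₁ =O[𝓝[>] (0 : ℝ)] (fun h => h ^ 2 * ε h ^ ((a : ℝ) + b - Y - 2)) ∧
        R₂ =O[𝓝[>] (0 : ℝ)] (fun h => h ^ (1 + (a : ℝ) / 2) * ε h ^ ((b : ℝ) - Y))) ∧
    (Even a → Odd b →
      ∃ R₁ R₂ : ℝ → ℝ,
        (∀ h : ℝ, 0 < h →
          (∫ ω, (Real.sqrt h * W ω) ^ a * (J h ω) ^ b *
              Set.indicator {x : ℝ | |x| ≤ ε h} (fun _ => (1 : ℝ))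
                (σ * Real.sqrt h * W ω + J h ω) ∂P) = R₁ h + R₂ h) ∧
        R₁ =O[𝓝[>] (0 : ℝ)] (fun h => h ^ 2 * ε h ^ ((a : ℝ) + b - Y - 2)) ∧
        R₂ =O[𝓝[>] (0 : ℝ)]
          (fun h => h ^ ((1 + (a : ℝ)) / 2) * ε h ^ ((b : ℝ) - Y / 2))) := by
  obtain ⟨M, hM⟩ := hq_bdd
  obtain ⟨C, hC, hCb⟩ := jump_bounds (b₀ := b₀) hY1 hY2 hCp hCm hq_meas hq_nonneg hM hJmeas hJcf
  obtain ⟨n, hn⟩ := exists_nat_ge (2 / δbar)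
  have hn2 : 2 ≤ δbar * n := by
    rw [div_le_iff₀ hδ1] at hn; linarith
  set I : ℝ → ℝ := fun h => ∫ ω, (Real.sqrt h * W ω) ^ a * (J h ω) ^ b *
              Set.indicator {x : ℝ | |x| ≤ ε h} (fun _ => (1 : ℝ))
                (σ * Real.sqrt h * W ω + J h ω) ∂P with hI
  have hIf : ∀ h, I h = ∫ ω, fI σ (Real.sqrt h) (ε h) a b (W ω) (J h ω) ∂P := fun h => rfl
  -- the common facts
  have hev : ∀ᶠ h in 𝓝[>] (0 : ℝ), 0 < h ∧ h ≤ 1 ∧ 0 < ε h ∧ ε h ≤ 1 ∧ Real.sqrt h ≤ ε h ∧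
      (Real.sqrt h / ε h) ^ n ≤ h ^ 2 := by
    filter_upwards [self_mem_nhdsWithin, hεlow, hε0.eventually (Iic_mem_nhds (zero_lt_one)),
      nhdsWithin_le_nhds (Iic_mem_nhds (zero_lt_one))] with h h1 h2 h3 h4
    have hh : 0 < h := h1
    have hh1 : h ≤ 1 := h4
    have he := hεpos h hh
    refine ⟨hh, hh1, he, h3, ?_, ?_⟩
    · refine le_trans ?_ h2
      rw [Real.sqrt_eq_rpow]
      exact Real.rpow_le_rpow_of_exponent_ge hh hh1 (by linarith)
    · have h5 : Real.sqrt h / ε h ≤ h ^ δbar := by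
        rw [div_le_iff₀ he]
        calc Real.sqrt h = h ^ δbar * h ^ (1 / 2 - δbar) := by
              rw [← Real.rpow_add hh, Real.sqrt_eq_rpow]; congr 1; ring
          _ ≤ _ := by gcongr
      calc (Real.sqrt h / ε h) ^ n ≤ (h ^ δbar) ^ n := by gcongr
        _ = h ^ (δbar * n) := by rw [← Real.rpow_natCast, ← Real.rpow_mul hh.le]
        _ ≤ h ^ (2 : ℝ) := Real.rpow_le_rpow_of_exponent_ge hh hh1 hn2
        _ = h ^ 2 := by norm_num
  have hzero : ∀ g : ℝ → ℝ, (fun _ : ℝ => (0 : ℝ)) =O[𝓝[>] (0 : ℝ)] g :=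
    fun g => isBigO_zero g _
  set T := tC σ b n * gMom (a + b + n) with hT
  have hT0 : 0 ≤ T := mul_nonneg (by unfold tC; positivity) (gMom_nonneg _)
  have hsq : ∀ h : ℝ, 0 < h → Real.sqrt h ^ 2 = h := fun h hh => Real.sq_sqrt hh.le
  have hka : ∀ h : ℝ, 0 < h → h ^ (1 + (a : ℝ) / 2) = h * Real.sqrt h ^ a := by
    intro h hh
    rw [Real.rpow_add hh, Real.rpow_one, Real.sqrt_eq_rpow, ← Real.rpow_natCast,
      ← Real.rpow_mul hh.le]
    congr 2; ring
  have hka1 : ∀ h : ℝ, 0 < h → h ^ ((1 + (a : ℝ)) / 2) = Real.sqrt h ^ (a + 1) := by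
    intro h hh
    rw [Real.sqrt_eq_rpow, ← Real.rpow_natCast, ← Real.rpow_mul hh.le]
    congr 1; push_cast; ring
  refine ⟨fun hao => ?_, fun hae hbe => ?_, fun hae hbo => ?_⟩
  · -- `a` odd
    refine ⟨I, fun _ => 0, fun h _ => by simp [hI], ?_, hzero _⟩
    refine IsBigO.of_bound (2 ^ b * C * (σ * gMom (a + 1) + gMom a) + T) ?_
    filter_upwards [hev] with h ⟨hh, hh1, he, he1, hke, hkn⟩
    have hk : 0 < Real.sqrt h := Real.sqrt_pos.2 hh
    have hG : 0 ≤ σ * gMom (a + 1) + gMom a :=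
      add_nonneg (mul_nonneg hσ.le (gMom_nonneg _)) (gMom_nonneg _)
    have hs := (hCb h hh hh1 (ε h) he he1).2
    have hmain := fI_bound_odd hWmeas hW (hJmeas h) (hindep h hh) hσ hk he
      (D := C * h * ε h ^ (-1 - Y)) (by positivity) hao b n hs
    rw [← hIf] at hmain
    rw [Real.norm_eq_abs, Real.norm_eq_abs, abs_of_nonneg (a := h ^ 2 * _) (by positivity)]
    refine hmain.trans ?_
    set k := Real.sqrt h with hkdef
    have hkh : k ^ 2 = h := hsq h hh
    have e1 : k ^ (a + 1) * ε h ^ b * h * ε h ^ (-1 - Y)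
        ≤ h ^ 2 * ε h ^ ((a : ℝ) + b - Y - 2) := by
      have e2 : ε h ^ ((a : ℝ) + b - Y - 2) = ε h ^ (a - 1) * ε h ^ b * ε h ^ (-1 - Y) := by
        rw [← Real.rpow_natCast, ← Real.rpow_natCast, ← Real.rpow_add he, ← Real.rpow_add he,
          Nat.cast_sub ha]
        congr 1; push_cast; ring
      have e3 : k ^ (a + 1) = k ^ (a - 1) * h := by
        rw [← hkh, ← pow_add]; congr 1; omega
      rw [e2, e3]
      calc k ^ (a - 1) * h * ε h ^ b * h * ε h ^ (-1 - Y)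
          ≤ ε h ^ (a - 1) * h * ε h ^ b * h * ε h ^ (-1 - Y) := by gcongr
        _ = _ := by ring
    have e4 : k ^ (a + b) * (k / ε h) ^ n ≤ h ^ 2 * ε h ^ ((a : ℝ) + b - Y - 2) := by
      calc k ^ (a + b) * (k / ε h) ^ n ≤ ε h ^ (a + b) * h ^ 2 := by gcongr
        _ ≤ ε h ^ ((a : ℝ) + b - Y - 2) * h ^ 2 := by
            gcongr
            rw [← Real.rpow_natCast]
            refine Real.rpow_le_rpow_of_exponent_ge he he1 ?_
            push_cast; linarith
        _ = _ := by ring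
    calc _ = 2 ^ b * C * (σ * gMom (a + 1) + gMom a) * (k ^ (a + 1) * ε h ^ b * h * ε h ^ (-1 - Y))
          + T * (k ^ (a + b) * (k / ε h) ^ n) := by rw [hT, mul_pow]; ring
      _ ≤ 2 ^ b * C * (σ * gMom (a + 1) + gMom a) * (h ^ 2 * ε h ^ ((a : ℝ) + b - Y - 2))
          + T * (h ^ 2 * ε h ^ ((a : ℝ) + b - Y - 2)) := by gcongr
      _ = _ := by ring
  · -- `a`, `b` even
    refine ⟨fun _ => 0, I, fun h _ => by simp [hI], hzero _, ?_⟩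
    refine IsBigO.of_bound (gMom a * 2 ^ (b - 2) * C + T) ?_
    filter_upwards [hev] with h ⟨hh, hh1, he, he1, hke, hkn⟩
    have hk : 0 < Real.sqrt h := Real.sqrt_pos.2 hh
    have hb2 : 2 ≤ b := by
      obtain ⟨c, hc⟩ := hbe; omega
    have hG := gMom_nonneg a
    have hs := trunc_two (hJmeas h) he hb2 (hCb h hh hh1 (ε h) he he1).1
    have hmain := fI_bound_even hWmeas hW (hJmeas h) (hindep h hh) hσ hk he a b n
    rw [← hIf] at hmain
    rw [Real.norm_eq_abs, Real.norm_eq_abs, abs_of_nonneg (a := h ^ (1 + (a : ℝ) / 2) * _)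
      (by positivity), hka h hh]
    refine hmain.trans ?_
    set k := Real.sqrt h with hkdef
    have e2 : ε h ^ ((b : ℝ) - Y) = ε h ^ (b - 2) * ε h ^ (2 - Y) := by
      rw [← Real.rpow_natCast, ← Real.rpow_add he, Nat.cast_sub hb2]
      congr 1; push_cast; ring
    have e4 : k ^ (a + b) * (k / ε h) ^ n ≤ h * k ^ a * ε h ^ ((b : ℝ) - Y) := by
      calc k ^ (a + b) * (k / ε h) ^ n ≤ k ^ (a + b) * h ^ 2 := by gcongr
        _ = k ^ a * k ^ b * (h * h) := by ring
        _ ≤ k ^ a * ε h ^ b * (1 * h) := by gcongr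
        _ ≤ k ^ a * ε h ^ ((b : ℝ) - Y) * (1 * h) := by
            gcongr
            rw [← Real.rpow_natCast]
            exact Real.rpow_le_rpow_of_exponent_ge he he1 (by linarith)
        _ = _ := by ring
    calc _ ≤ k ^ a * gMom a * ((2 * ε h) ^ (b - 2) * (C * (h * ε h ^ (2 - Y))))
          + T * (k ^ (a + b) * (k / ε h) ^ n) := by
            rw [hT]
            refine add_le_add (mul_le_mul_of_nonneg_left hs (by positivity)) (le_of_eq (by ring))
      _ = gMom a * 2 ^ (b - 2) * C * (h * k ^ a * ε h ^ ((b : ℝ) - Y))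
          + T * (k ^ (a + b) * (k / ε h) ^ n) := by rw [e2, mul_pow]; ring
      _ ≤ gMom a * 2 ^ (b - 2) * C * (h * k ^ a * ε h ^ ((b : ℝ) - Y))
          + T * (h * k ^ a * ε h ^ ((b : ℝ) - Y)) := by gcongr
      _ = _ := by ring
  · -- `a` even, `b` odd
    refine ⟨fun _ => 0, I, fun h _ => by simp [hI], hzero _, ?_⟩
    refine IsBigO.of_bound (gMom a * 2 ^ (b - 1) * Real.sqrt C + T) ?_
    filter_upwards [hev] with h ⟨hh, hh1, he, he1, hke, hkn⟩
    have hk : 0 < Real.sqrt h := Real.sqrt_pos.2 hh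
    have hG := gMom_nonneg a
    have hCs : 0 < Real.sqrt C := Real.sqrt_pos.2 hC
    have ht2 : (Real.sqrt C * Real.sqrt h * ε h ^ (1 - Y / 2)) ^ 2 = C * (h * ε h ^ (2 - Y)) := by
      rw [mul_pow, mul_pow, Real.sq_sqrt hC.le, hsq h hh, ← Real.rpow_natCast (ε h ^ (1 - Y / 2)),
        ← Real.rpow_mul he.le, mul_assoc]
      congr 3; push_cast; ring
    have hs := trunc_one (hJmeas h) he hb (t := Real.sqrt C * Real.sqrt h * ε h ^ (1 - Y / 2))
      (by positivity) (by rw [ht2]; exact (hCb h hh hh1 (ε h) he he1).1)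
    have hmain := fI_bound_even hWmeas hW (hJmeas h) (hindep h hh) hσ hk he a b n
    rw [← hIf] at hmain
    rw [Real.norm_eq_abs, Real.norm_eq_abs, abs_of_nonneg (a := h ^ ((1 + (a : ℝ)) / 2) * _)
      (by positivity), hka1 h hh]
    refine hmain.trans ?_
    have hk1 : Real.sqrt h ≤ 1 := hke.trans he1
    have hkh : Real.sqrt h ^ 2 = h := hsq h hh
    set k := Real.sqrt h with hkdef
    have e2 : ε h ^ ((b : ℝ) - Y / 2) = ε h ^ (b - 1) * ε h ^ (1 - Y / 2) := by
      rw [← Real.rpow_natCast, ← Real.rpow_add he, Nat.cast_sub hb]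
      congr 1; push_cast; ring
    have hh2 : h ^ 2 ≤ k := by
      calc h ^ 2 = k * k ^ 3 := by rw [← hkh]; ring
        _ ≤ k * 1 := by gcongr; exact pow_le_one₀ hk.le hk1
        _ = k := mul_one k
    have e4 : k ^ (a + b) * (k / ε h) ^ n ≤ k ^ (a + 1) * ε h ^ ((b : ℝ) - Y / 2) := by
      calc k ^ (a + b) * (k / ε h) ^ n ≤ k ^ (a + b) * h ^ 2 := by gcongr
        _ = k ^ a * k ^ b * h ^ 2 := by ring
        _ ≤ k ^ a * ε h ^ b * k := by gcongr
        _ ≤ k ^ a * ε h ^ ((b : ℝ) - Y / 2) * k := by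
            gcongr
            rw [← Real.rpow_natCast]
            exact Real.rpow_le_rpow_of_exponent_ge he he1 (by linarith)
        _ = _ := by ring
    calc _ ≤ k ^ a * gMom a * ((2 * ε h) ^ (b - 1) * (Real.sqrt C * k * ε h ^ (1 - Y / 2)))
          + T * (k ^ (a + b) * (k / ε h) ^ n) := by
            rw [hT]
            refine add_le_add (mul_le_mul_of_nonneg_left hs (by positivity)) (le_of_eq (by ring))
      _ = gMom a * 2 ^ (b - 1) * Real.sqrt C * (k ^ (a + 1) * ε h ^ ((b : ℝ) - Y / 2))
          + T * (k ^ (a + b) * (k / ε h) ^ n) := by rw [e2, mul_pow]; ring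
      _ ≤ gMom a * 2 ^ (b - 1) * Real.sqrt C * (k ^ (a + 1) * ε h ^ ((b : ℝ) - Y / 2))
          + T * (k ^ (a + 1) * ε h ^ ((b : ℝ) - Y / 2)) := by gcongr
      _ = _ := by ring

end
end

section
/- Let S be a real random variable with Lebesgue density p_S and characteristic function E[exp(iuS)] = exp(−ς^Y|u|^Y(1 − iβ·sgn(u)·tan(πY/2))) for all u ∈ ℝ, and suppose that for some constant K and all z > 0, |p_S(z) − C₊·z^{−Y−1}| ≤ K·(z^{−Y−1} ∧ z^{−2Y−1}) and |p_S(−z) − C₋·z^{−Y−1}| ≤ K·(z^{−Y−1} ∧ z^{−2Y−1}). Define D(u) := p_S(u) − (C₋·1_{u<0} + C₊·1_{u>0})·|u|^{−1−Y}. Then the function u ↦ u²·D(u) is Lebesgue integrable on ℝ and ∫_ℝ u²·D(u) du = 0. -/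
open MeasureTheory ProbabilityTheory Filter Asymptotics Set
open scoped Topology NNReal ENNReal Real

noncomputable section

/-- Characteristic function of the strictly `Y`-stable variable `S`. -/
def stableCF (Y Cp Cm : ℝ) (u : ℝ) : ℂ := Complex.exp (-stablePart Y Cp Cm u)

/-- Standard normal density `φ`. -/
def gaussDensity (x : ℝ) : ℝ := (Real.sqrt (2 * π))⁻¹ * Real.exp (-x ^ 2 / 2)

/-- Integrability on the half-line. -/
lemma aux_integrableOn (Y K : ℝ) (hY1 : 1 < Y) (hY2 : Y < 2) (f : ℝ → ℝ) (hf : Measurable f)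
    (hb : ∀ z : ℝ, 0 < z → |f z| ≤ K * min (z ^ (-Y - 1)) (z ^ (-2 * Y - 1))) :
    IntegrableOn (fun z => z ^ 2 * f z) (Ioi 0) := by
  have hK : 0 ≤ K := by
    have := hb 1 one_pos
    simp at this
    exact (abs_nonneg _).trans this
  have hm : Measurable (fun z => z ^ 2 * f z) := by fun_prop
  rw [← Ioc_union_Ioi_eq_Ioi (zero_le_one : (0:ℝ) ≤ 1)]
  refine IntegrableOn.union ?_ ?_
  · have h1 : IntegrableOn (fun z : ℝ => K * z ^ (1 - Y)) (Ioc 0 1) := by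
      refine Integrable.const_mul ?_ K
      have := intervalIntegral.intervalIntegrable_rpow' (r := 1 - Y) (by linarith) (a := 0) (b := 1)
      exact (intervalIntegrable_iff_integrableOn_Ioc_of_le zero_le_one).1 this
    refine Integrable.mono' h1 hm.aestronglyMeasurable ?_
    refine (ae_restrict_iff' measurableSet_Ioc).2 (ae_of_all _ fun z hz => ?_)
    have hz0 : 0 < z := hz.1
    rw [Real.norm_eq_abs, abs_mul, abs_of_nonneg (sq_nonneg z)]
    have h2 : z ^ (1 - Y) = z ^ 2 * z ^ (-Y - 1) := by
      rw [← Real.rpow_natCast, ← Real.rpow_add hz0]; congr 1; push_cast; ring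
    rw [h2]
    calc z ^ 2 * |f z| ≤ z ^ 2 * (K * z ^ (-Y - 1)) := by
          refine mul_le_mul_of_nonneg_left ((hb z hz0).trans ?_) (sq_nonneg z)
          exact mul_le_mul_of_nonneg_left (min_le_left _ _) hK
      _ = _ := by ring
  · have h1 : IntegrableOn (fun z : ℝ => K * z ^ (1 - 2 * Y)) (Ioi 1) :=
      Integrable.const_mul (integrableOn_Ioi_rpow_of_lt (by linarith) one_pos) K
    refine Integrable.mono' h1 hm.aestronglyMeasurable ?_
    refine (ae_restrict_iff' measurableSet_Ioi).2 (ae_of_all _ fun z hz => ?_)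
    have hz0 : 0 < z := lt_trans one_pos hz
    rw [Real.norm_eq_abs, abs_mul, abs_of_nonneg (sq_nonneg z)]
    have h2 : z ^ (1 - 2 * Y) = z ^ 2 * z ^ (-2 * Y - 1) := by
      rw [← Real.rpow_natCast, ← Real.rpow_add hz0]; congr 1; push_cast; ring
    rw [h2]
    calc z ^ 2 * |f z| ≤ z ^ 2 * (K * z ^ (-2 * Y - 1)) := by
          refine mul_le_mul_of_nonneg_left ((hb z hz0).trans ?_) (sq_nonneg z)
          exact mul_le_mul_of_nonneg_left (min_le_right _ _) hK
      _ = _ := by ring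

lemma aux_cos_bound (y : ℝ) : |1 - Real.cos y| ≤ y ^ 2 / 2 := by
  rw [abs_of_nonneg (by linarith [Real.cos_le_one y])]
  linarith [Real.one_sub_sq_div_two_le_cos (x := y)]

lemma aux_integrable_cos (D : ℝ → ℝ) (hD : Measurable D)
    (hi : Integrable (fun x => x ^ 2 * D x)) (u : ℝ) :
    Integrable (fun x => (1 - Real.cos (u * x)) * D x) := by
  refine Integrable.mono' (hi.norm.const_mul (u ^ 2 / 2))
    (by fun_prop) (ae_of_all _ fun x => ?_)
  rw [Real.norm_eq_abs, Real.norm_eq_abs, abs_mul, abs_mul, abs_of_nonneg (sq_nonneg x)]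
  calc _ ≤ ((u * x) ^ 2 / 2) * |D x| :=
        mul_le_mul_of_nonneg_right (aux_cos_bound _) (abs_nonneg _)
    _ = _ := by ring

lemma aux_limit (D : ℝ → ℝ) (hD : Measurable D)
    (hi : Integrable (fun x => x ^ 2 * D x)) :
    Tendsto (fun u : ℝ => (∫ x, (1 - Real.cos (u * x)) * D x) / u ^ 2) (𝓝[>] 0)
      (𝓝 ((∫ x, x ^ 2 * D x) / 2)) := by
  have key : Tendsto (fun u : ℝ => ∫ x, ((1 - Real.cos (u * x)) / u ^ 2) * D x) (𝓝[>] 0)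
      (𝓝 (∫ x, (x ^ 2 * D x) / 2)) := by
    refine tendsto_integral_filter_of_dominated_convergence (fun x => ‖x ^ 2 * D x‖) ?_ ?_ hi.norm ?_
    · exact Eventually.of_forall fun u => by fun_prop
    · filter_upwards [self_mem_nhdsWithin] with u hu
      have hu : 0 < u := hu
      refine ae_of_all _ fun x => ?_
      rw [Real.norm_eq_abs, Real.norm_eq_abs, abs_mul, abs_mul]
      refine mul_le_mul_of_nonneg_right ?_ (abs_nonneg _)
      rw [abs_div, abs_of_nonneg (sq_nonneg u), abs_of_nonneg (sq_nonneg x),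
        div_le_iff₀ (by positivity)]
      refine (aux_cos_bound _).trans ?_
      nlinarith [sq_nonneg (u * x)]
    · refine ae_of_all _ fun x => ?_
      have hd : HasDerivAt (fun u : ℝ => Real.sin (u * (x / 2))) (x / 2) 0 := by
        have := ((hasDerivAt_id (0:ℝ)).mul_const (x / 2)).sin
        simpa using this
      have hs := hd.tendsto_slope_zero_right
      have h2 := ((hs.pow 2).const_mul 2).mul_const (D x)
      convert h2 using 2 with u
      · simp only [zero_add, zero_mul, Real.sin_zero, sub_zero, smul_eq_mul]
        have : Real.cos (u * x) = 1 - 2 * Real.sin (u * (x / 2)) ^ 2 := by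
          have h3 := Real.cos_two_mul (u * (x / 2))
          have h4 := Real.sin_sq_add_cos_sq (u * (x / 2))
          rw [show u * x = 2 * (u * (x / 2)) by ring, h3]; linarith
        rw [this]; ring
      · ring
  rw [integral_div] at key
  refine key.congr fun u => ?_
  rw [← integral_div]
  congr 1; ext x; ring

/-- Deterministic asymptotic comparison. -/
lemma aux_asymp (Y a C M : ℝ) (hY1 : 1 < Y) (hY2 : Y < 2) (F : ℝ → ℝ)
    (hF : ∀ᶠ u in 𝓝[>] (0:ℝ), |F u - a * u ^ Y| ≤ C * u ^ (2 * Y))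
    (hM : Tendsto (fun u => F u / u ^ 2) (𝓝[>] 0) (𝓝 M)) : M = 0 := by
  have pw : ∀ r : ℝ, 0 < r → Tendsto (fun u : ℝ => u ^ r) (𝓝[>] 0) (𝓝 0) := fun r hr => by
    have := (Real.continuousAt_rpow_const 0 r (Or.inr hr.le)).tendsto
    rw [Real.zero_rpow hr.ne'] at this
    exact this.mono_left nhdsWithin_le_nhds
  have ha : a = 0 := by
    have t1 : Tendsto (fun u : ℝ => F u / u ^ 2 * u ^ (2 - Y)) (𝓝[>] 0) (𝓝 0) := by
      simpa using hM.mul (pw (2 - Y) (by linarith))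
    have t2 : Tendsto (fun u : ℝ => F u / u ^ 2 * u ^ (2 - Y) - a) (𝓝[>] 0) (𝓝 0) := by
      refine squeeze_zero_norm' (a := fun u => C * u ^ Y) ?_ (by simpa using (pw Y (by linarith)).const_mul C)
      filter_upwards [hF, self_mem_nhdsWithin] with u h1 hu
      have hu : 0 < u := hu
      have e1 : u ^ (2 - Y) = u ^ 2 / u ^ Y := by
        rw [Real.rpow_sub hu]; norm_num
      have e2 : u ^ (2 * Y) = u ^ Y * u ^ Y := by rw [← Real.rpow_add hu]; ring_nf
      have hp : 0 < u ^ Y := by positivity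
      have e3 : F u / u ^ 2 * u ^ (2 - Y) - a = (F u - a * u ^ Y) / u ^ Y := by
        rw [e1]; field_simp
      rw [e3, Real.norm_eq_abs, abs_div, abs_of_pos hp, div_le_iff₀ hp]
      rw [e2] at h1; linarith
    have t3 := t1.sub t2
    simp only [sub_sub_cancel, sub_zero] at t3
    exact tendsto_nhds_unique tendsto_const_nhds t3
  refine tendsto_nhds_unique hM ?_
  refine squeeze_zero_norm' (a := fun u => C * u ^ (2 * Y - 2)) ?_
    (by simpa using (pw (2 * Y - 2) (by linarith)).const_mul C)
  filter_upwards [hF, self_mem_nhdsWithin] with u h1 hu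
  have hu : 0 < u := hu
  have e1 : u ^ (2 * Y - 2) = u ^ (2 * Y) / u ^ 2 := by
    rw [Real.rpow_sub hu]; norm_num
  have hp : 0 < u ^ 2 := by positivity
  rw [ha, zero_mul, sub_zero] at h1
  rw [Real.norm_eq_abs, abs_div, abs_of_pos hp, e1, ← mul_div_assoc]
  exact div_le_div_of_nonneg_right h1 hp.le

/-- Lemma C.8: the second moment of the difference between the stable density
and its tail approximation vanishes: `∫ u² D(u) du = 0`. -/
theorem second_moment_density_difference_zero
    (Y Cp Cm : ℝ)
    (hY1 : 1 < Y) (hY2 : Y < 2) (hCp : 0 < Cp) (hCm : 0 < Cm)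
    (μS : Measure ℝ) [IsProbabilityMeasure μS]
    (pS : ℝ → ℝ) (hpS_meas : Measurable pS) (hpS_nonneg : ∀ x, 0 ≤ pS x)
    (hdensity : μS = volume.withDensity fun x => ENNReal.ofReal (pS x))
    (hcf : ∀ u : ℝ, ∫ x, Complex.exp (Complex.I * u * x) ∂μS = stableCF Y Cp Cm u)
    (K : ℝ)
    (hbound_pos : ∀ z : ℝ, 0 < z →
      |pS z - Cp * z ^ (-Y - 1)| ≤ K * min (z ^ (-Y - 1)) (z ^ (-2 * Y - 1)))
    (hbound_neg : ∀ z : ℝ, 0 < z →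
      |pS (-z) - Cm * z ^ (-Y - 1)| ≤ K * min (z ^ (-Y - 1)) (z ^ (-2 * Y - 1))) :
    Integrable (fun u : ℝ =>
        u ^ 2 * (pS u - (if u < 0 then Cm else if 0 < u then Cp else 0) * |u| ^ (-1 - Y))) ∧
      (∫ u : ℝ,
        u ^ 2 * (pS u - (if u < 0 then Cm else if 0 < u then Cp else 0) * |u| ^ (-1 - Y)))
        = 0 := by
  set n : ℝ → ℝ := fun u => (if u < 0 then Cm else if 0 < u then Cp else 0) * |u| ^ (-1 - Y)
    with hn
  set D : ℝ → ℝ := fun u => pS u - n u with hD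
  have hn_meas : Measurable n := by
    refine Measurable.mul ?_ (by fun_prop)
    exact Measurable.ite measurableSet_Iio measurable_const
      (Measurable.ite measurableSet_Ioi measurable_const measurable_const)
  have hD_meas : Measurable D := hpS_meas.sub hn_meas
  have hint : Integrable (fun u => u ^ 2 * D u) := by
    have hp : IntegrableOn (fun u => u ^ 2 * D u) (Ioi 0) := by
      refine aux_integrableOn Y K hY1 hY2 D hD_meas fun z hz => ?_
      have : D z = pS z - Cp * z ^ (-Y - 1) := by
        simp only [hD, hn, if_neg hz.le.not_gt, if_pos hz, abs_of_pos hz]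
        ring_nf
      rw [this]; exact hbound_pos z hz
    have hm : IntegrableOn (fun u => u ^ 2 * D (-u)) (Ioi 0) := by
      refine aux_integrableOn Y K hY1 hY2 (fun u => D (-u)) (hD_meas.comp measurable_neg)
        fun z hz => ?_
      have : D (-z) = pS (-z) - Cm * z ^ (-Y - 1) := by
        simp only [hD, hn, if_pos (neg_lt_zero.2 hz), abs_neg, abs_of_pos hz]
        ring_nf
      simp only [this]; exact hbound_neg z hz
    have hm' : IntegrableOn (fun u => u ^ 2 * D u) (Iio 0) := by
      have := IntegrableOn.comp_neg_Iio (c := 0) (f := fun u => u ^ 2 * D (-u)) (by simpa using hm)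
      simpa using this
    rw [← integrableOn_univ, ← Iic_union_Ioi (a := (0:ℝ))]
    exact ((integrableOn_Iic_iff_integrableOn_Iio).2 hm').union hp
  refine ⟨hint, ?_⟩
  have hmeasE : Measurable fun x => ENNReal.ofReal (pS x) := hpS_meas.ennreal_ofReal
  have hpint : Integrable pS := by
    refine ⟨hpS_meas.aestronglyMeasurable, ?_⟩
    rw [hasFiniteIntegral_iff_ofReal (ae_of_all _ hpS_nonneg)]
    have h1 : μS univ = 1 := measure_univ
    rw [hdensity, withDensity_apply _ MeasurableSet.univ, Measure.restrict_univ] at h1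
    rw [h1]; exact ENNReal.one_lt_top
  have hpcos : ∀ u : ℝ, Integrable (fun x => (1 - Real.cos (u * x)) * pS x) := fun u => by
    refine Integrable.mono' (hpint.const_mul 2) (by fun_prop) (ae_of_all _ fun x => ?_)
    rw [Real.norm_eq_abs, abs_mul, abs_of_nonneg (hpS_nonneg x)]
    refine mul_le_mul_of_nonneg_right ?_ (hpS_nonneg x)
    rw [abs_le]; constructor <;> linarith [Real.cos_le_one (u * x), Real.neg_one_le_cos (u * x)]
  have hpval : ∀ u : ℝ, ∫ x, (1 - Real.cos (u * x)) * pS x = (1 - stableCF Y Cp Cm u).re := by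
    intro u
    have e1 : ∫ x, (1 - Real.cos (u * x)) * pS x = ∫ x, (1 - Real.cos (u * x)) ∂μS := by
      rw [hdensity, integral_withDensity_eq_integral_toReal_smul hmeasE (by simp)]
      congr 1; ext x
      rw [ENNReal.toReal_ofReal (hpS_nonneg x), smul_eq_mul, mul_comm]
    have hce : Integrable (fun x : ℝ => Complex.exp (Complex.I * u * x)) μS := by
      refine Integrable.of_bound (by fun_prop) 1 (ae_of_all _ fun x => ?_)
      rw [Complex.norm_exp]; simp
    have hre : ∀ x : ℝ, (Complex.exp (Complex.I * u * x)).re = Real.cos (u * x) := fun x => by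
      rw [show Complex.I * u * x = ((u * x : ℝ) : ℂ) * Complex.I by push_cast; ring,
        Complex.exp_ofReal_mul_I_re]
    have e2 : ∫ x, Real.cos (u * x) ∂μS = (stableCF Y Cp Cm u).re := by
      rw [← hcf u]
      have := integral_re hce
      simp only [RCLike.re_to_complex, hre] at this
      exact this
    have hci : Integrable (fun x : ℝ => Real.cos (u * x)) μS := by
      refine Integrable.of_bound (by fun_prop) 1 (ae_of_all _ fun x => ?_)
      exact Real.abs_cos_le_one _
    rw [e1, integral_sub (integrable_const _) hci, e2]
    simp
  set B := ∫ x, (1 - Real.cos x) * n x with hB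
  have hscale : ∀ u : ℝ, 0 < u → ∫ x, (1 - Real.cos (u * x)) * n x = u ^ Y * B := by
    intro u hu
    have h1 : ∀ x, (1 - Real.cos (u * x)) * n x
        = u ^ (1 + Y) * ((1 - Real.cos (u * x)) * n (u * x)) := by
      intro x
      have hneg : u * x < 0 ↔ x < 0 := by
        constructor <;> intro h <;> nlinarith
      have : n (u * x) = u ^ (-1 - Y) * n x := by
        simp only [hn, mul_pos_iff_of_pos_left hu, hneg, abs_mul,
          abs_of_pos hu, Real.mul_rpow hu.le (abs_nonneg x)]
        ring
      rw [this]
      have h2 : u ^ (1 + Y) * u ^ (-1 - Y) = 1 := by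
        rw [← Real.rpow_add hu]; ring_nf; simp
      linear_combination (-(1 - Real.cos (u * x)) * n x) * h2
    simp_rw [h1]
    rw [integral_const_mul, Measure.integral_comp_mul_left (fun y => (1 - Real.cos y) * n y) u,
      abs_of_pos (inv_pos.2 hu), smul_eq_mul, ← mul_assoc, ← hB, Real.rpow_add hu, Real.rpow_one]
    field_simp
  have hF : ∀ u : ℝ, 0 < u →
      ∫ x, (1 - Real.cos (u * x)) * D x = (1 - stableCF Y Cp Cm u).re - u ^ Y * B := by
    intro u hu
    have hni : Integrable (fun x => (1 - Real.cos (u * x)) * n x) := by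
      refine ((hpcos u).sub (aux_integrable_cos D hD_meas hint u)).congr (ae_of_all _ fun x => ?_)
      simp only [Pi.sub_apply, hD]; ring
    rw [← hpval u, ← hscale u hu, ← integral_sub (hpcos u) hni]
    congr 1; ext x; simp only [hD]; ring
  set κ : ℂ := (varsigma Y Cp Cm ^ Y : ℝ) *
    (1 - Complex.I * ((Cp - Cm) / (Cp + Cm)) * Real.tan (π * Y / 2)) with hκ
  have hst : ∀ u : ℝ, 0 < u → stableCF Y Cp Cm u = Complex.exp (-(((u ^ Y : ℝ) : ℂ) * κ)) := by
    intro u hu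
    rw [stableCF, stablePart, Real.sign_of_pos hu, abs_of_pos hu, hκ]
    congr 2; push_cast; ring
  have hsmall : ∀ᶠ u in 𝓝[>] (0:ℝ), u ^ Y * ‖κ‖ < 1 := by
    have h1 := (Real.continuousAt_rpow_const 0 Y (Or.inr (by linarith))).tendsto.mul_const ‖κ‖
    rw [Real.zero_rpow (by linarith), zero_mul] at h1
    exact (h1.mono_left nhdsWithin_le_nhds).eventually_lt_const one_pos
  have hfin := aux_asymp Y (κ.re - B) (‖κ‖ ^ 2) _ hY1 hY2
    (fun u => ∫ x, (1 - Real.cos (u * x)) * D x) ?_ (aux_limit D hD_meas hint)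
  · linarith
  filter_upwards [hsmall, self_mem_nhdsWithin] with u h1 hu
  have hu : 0 < u := hu
  have hp : 0 ≤ u ^ Y := by positivity
  have hnorm : ‖-(((u ^ Y : ℝ) : ℂ) * κ)‖ = u ^ Y * ‖κ‖ := by
    rw [norm_neg, norm_mul, Complex.norm_real, Real.norm_of_nonneg hp]
  have h2 := Complex.norm_exp_sub_one_sub_id_le (x := -(((u ^ Y : ℝ) : ℂ) * κ))
    (by rw [hnorm]; exact h1.le)
  rw [hnorm] at h2
  have h3 := (Complex.abs_re_le_norm _).trans h2
  rw [hF u hu, hst u hu]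
  have e2 : u ^ (2 * Y) = u ^ Y * u ^ Y := by rw [← Real.rpow_add hu]; ring_nf
  have e3 : (1 - Complex.exp (-(((u ^ Y : ℝ) : ℂ) * κ))).re - u ^ Y * B - (κ.re - B) * u ^ Y
      = -(Complex.exp (-(((u ^ Y : ℝ) : ℂ) * κ)) - 1 - -(((u ^ Y : ℝ) : ℂ) * κ)).re := by
    simp only [Complex.sub_re, Complex.neg_re, Complex.re_ofReal_mul, Complex.one_re]
    ring
  rw [e3, abs_neg, e2]
  refine h3.trans (le_of_eq (by ring))

end
end

section
/- For every Y ∈ (1,2) and every ω ∈ ℝ with ω ≠ 0, the improper integral lim_{R→∞} ∫_0^R e^{iuω}·u^{1−Y} du exists and equals −|ω|^{Y−2}·e^{−i·sgn(ω)·πY/2}·Γ(2−Y). -/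
open MeasureTheory Filter Set
open scoped Topology Real

noncomputable section

lemma norm_integrand_aux (z : ℂ) (p u : ℝ) (hu : 0 < u) :
    ‖Complex.exp (-(z * u)) * ((u ^ p : ℝ) : ℂ)‖ = Real.exp (-(z.re * u)) * u ^ p := by
  rw [norm_mul, Complex.norm_exp, Complex.norm_real, Real.norm_of_nonneg (Real.rpow_nonneg hu.le _)]
  simp

lemma meas_aux (z : ℂ) (p : ℝ) :
    Measurable (fun u : ℝ => Complex.exp (-(z * u)) * ((u ^ p : ℝ) : ℂ)) := by
  fun_prop

lemma integrable_real_aux (b p : ℝ) (hb : 0 < b) (hp : -1 < p) :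
    IntegrableOn (fun u : ℝ => Real.exp (-(b * u)) * u ^ p) (Ioi 0) := by
  have := integrableOn_rpow_mul_exp_neg_mul_rpow (p := 1) hp one_pos hb
  refine this.congr_fun (fun x _ => ?_) measurableSet_Ioi
  simp [mul_comm]

lemma integrable_aux (z : ℂ) (p : ℝ) (hz : 0 < z.re) (hp : -1 < p) :
    IntegrableOn (fun u : ℝ => Complex.exp (-(z * u)) * ((u ^ p : ℝ) : ℂ)) (Ioi 0) := by
  refine Integrable.mono' (integrable_real_aux z.re p hz hp) (meas_aux z p).aestronglyMeasurable ?_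
  refine (ae_restrict_iff' measurableSet_Ioi).2 (ae_of_all _ fun u hu => ?_)
  exact (norm_integrand_aux z p u hu).le

lemma diff_aux (p : ℝ) (hp : -1 < p) (z : ℂ) (hz : 0 < z.re) :
    DifferentiableAt ℂ
      (fun z : ℂ => ∫ u in Ioi (0:ℝ), Complex.exp (-(z * u)) * ((u ^ p : ℝ) : ℂ)) z := by
  have hs : {w : ℂ | z.re / 2 < w.re} ∈ 𝓝 z :=
    (isOpen_lt continuous_const Complex.continuous_re).mem_nhds (by simp; linarith)
  have key := hasDerivAt_integral_of_dominated_loc_of_deriv_le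
    (μ := volume.restrict (Ioi (0:ℝ)))
    (F := fun (z : ℂ) (u : ℝ) => Complex.exp (-(z * u)) * ((u ^ p : ℝ) : ℂ))
    (F' := fun (z : ℂ) (u : ℝ) => -u * (Complex.exp (-(z * u)) * ((u ^ p : ℝ) : ℂ)))
    (bound := fun u : ℝ => Real.exp (-(z.re / 2 * u)) * u ^ (p + 1)) hs
    (Eventually.of_forall fun w => (meas_aux w p).aestronglyMeasurable)
    (integrable_aux z p hz hp)
    (Measurable.aestronglyMeasurable (by fun_prop)) ?_
    (integrable_real_aux _ _ (by linarith) (by linarith)) ?_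
  · exact key.2.differentiableAt
  · refine (ae_restrict_iff' measurableSet_Ioi).2 (ae_of_all _ fun u hu w hw => ?_)
    have hu' : 0 < u := hu
    have hw' : z.re / 2 < w.re := hw
    rw [norm_mul, norm_integrand_aux w p u hu, norm_neg, Complex.norm_real,
      Real.norm_of_nonneg hu'.le, Real.rpow_add hu', Real.rpow_one]
    have : Real.exp (-(w.re * u)) ≤ Real.exp (-(z.re / 2 * u)) := by
      apply Real.exp_le_exp.2; nlinarith
    have h2 : 0 ≤ u ^ p * u := by positivity
    calc _ = Real.exp (-(w.re * u)) * (u ^ p * u) := by ring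
      _ ≤ _ := by gcongr
  · refine ae_of_all _ fun u w _ => ?_
    have h1 : HasDerivAt (fun w : ℂ => -(w * u)) (-(1 * (u:ℂ))) w :=
      ((hasDerivAt_id w).mul_const (u : ℂ)).neg
    refine (h1.cexp.mul_const ((u ^ p : ℝ) : ℂ)).congr_deriv ?_
    ring

lemma gamma_aux (s : ℝ) (hs : 0 < s) (z : ℂ) (hz : 0 < z.re) :
    ∫ u in Ioi (0:ℝ), Complex.exp (-(z * u)) * ((u ^ (s - 1) : ℝ) : ℂ)
      = z ^ (-(s : ℂ)) * Real.Gamma s := by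
  have hU : IsOpen {w : ℂ | 0 < w.re} := isOpen_lt continuous_const Complex.continuous_re
  have hA : AnalyticOnNhd ℂ (fun z : ℂ => ∫ u in Ioi (0:ℝ),
      Complex.exp (-(z * u)) * ((u ^ (s - 1) : ℝ) : ℂ)) {w : ℂ | 0 < w.re} :=
    DifferentiableOn.analyticOnNhd
      (fun w hw => (diff_aux (s - 1) (by linarith) w hw).differentiableWithinAt) hU
  have hB : AnalyticOnNhd ℂ (fun z : ℂ => z ^ (-(s : ℂ)) * Real.Gamma s) {w : ℂ | 0 < w.re} :=
    DifferentiableOn.analyticOnNhd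
      (fun w hw => (((differentiableAt_id.cpow_const (Or.inl hw)).mul_const
        _)).differentiableWithinAt) hU
  have hpre : IsPreconnected {w : ℂ | 0 < w.re} := (convex_halfSpace_re_gt 0).isPreconnected
  have hreal : ∀ r : ℝ, 0 < r →
      ∫ u in Ioi (0:ℝ), Complex.exp (-((r:ℂ) * u)) * ((u ^ (s - 1) : ℝ) : ℂ)
      = (r:ℂ) ^ (-(s : ℂ)) * Real.Gamma s := by
    intro r hr
    have := Complex.integral_cpow_mul_exp_neg_mul_Ioi (a := s) (by simpa using hs) hr
    rw [Complex.Gamma_ofReal, one_div, Complex.inv_cpow, ← Complex.cpow_neg] at this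
    · rw [← this]
      refine setIntegral_congr_fun measurableSet_Ioi (fun u hu => ?_)
      have hu' : (0:ℝ) ≤ u := le_of_lt hu
      rw [Complex.ofReal_cpow hu', mul_comm]
      push_cast; rfl
    · rw [Complex.arg_ofReal_of_nonneg hr.le]; exact Real.pi_pos.ne
  refine hA.eqOn_of_preconnected_of_frequently_eq hB hpre (z₀ := 1) (by simp) ?_ hz
  have ht : Tendsto (fun r : ℝ => (r : ℂ)) (𝓝[>] 1) (𝓝[≠] 1) := by
    refine tendsto_nhdsWithin_iff.2 ⟨?_, ?_⟩
    · exact (Complex.continuous_ofReal.tendsto' 1 1 (by simp)).mono_left nhdsWithin_le_nhds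
    · filter_upwards [self_mem_nhdsWithin] with r hr
      have : (1:ℝ) < r := hr
      simp only [mem_compl_iff, mem_singleton_iff]
      exact_mod_cast this.ne'
  refine ht.frequently (Eventually.frequently ?_)
  filter_upwards [self_mem_nhdsWithin] with r hr
  exact hreal r (lt_trans one_pos hr)

lemma tail_aux (p : ℝ) (hp : -1 < p) (hp0 : p < 0) (z : ℂ) (hz : 0 < z.re) (R : ℝ) (hR : 0 < R) :
    ‖∫ u in Ioi R, Complex.exp (-(z * u)) * ((u ^ p : ℝ) : ℂ)‖ ≤ 2 * R ^ p / ‖z‖ := by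
  have hz0 : z ≠ 0 := by rintro rfl; simp at hz
  have hzn : 0 < ‖z‖ := norm_pos_iff.2 hz0
  have hexp : ∀ x : ℝ, 0 < x → ‖Complex.exp (-(z * x))‖ ≤ 1 := by
    intro x hx
    rw [Complex.norm_exp]
    apply Real.exp_le_one_iff.2
    simp; positivity
  have hp1 : IntegrableOn (fun x : ℝ => ‖z‖⁻¹ * (-p * x ^ (p - 1))) (Ioi R) :=
    ((integrableOn_Ioi_rpow_of_lt (by linarith) hR).const_mul _).const_mul _
  have hb : ∀ x ∈ Ioi R, ‖(((p * x ^ (p - 1) : ℝ) : ℂ)) * (-Complex.exp (-(z * x)) / z)‖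
      ≤ ‖z‖⁻¹ * (-p * x ^ (p - 1)) := by
    intro x hx
    have hx0 : 0 < x := lt_trans hR hx
    have h1 := hexp x hx0
    have h2 : 0 < x ^ (p - 1) := Real.rpow_pos_of_pos hx0 _
    rw [norm_mul, norm_div, norm_neg, Complex.norm_real, norm_mul, Real.norm_of_nonneg h2.le,
      Real.norm_of_nonpos hp0.le, div_eq_mul_inv]
    have h3 : 0 ≤ ‖z‖⁻¹ * (-p * x ^ (p - 1)) := by
      have : 0 < -p := by linarith
      positivity
    nlinarith
  have hb' := (ae_restrict_iff' (μ := volume) measurableSet_Ioi).2 (ae_of_all _ hb)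
  have hint : IntegrableOn (fun x : ℝ => (((p * x ^ (p - 1) : ℝ) : ℂ)) *
      (-Complex.exp (-(z * x)) / z)) (Ioi R) :=
    Integrable.mono' hp1 (Measurable.aestronglyMeasurable (by fun_prop)) hb'
  have hint0 := (integrable_aux z p hz hp).mono_set (Ioi_subset_Ioi hR.le)
  have hdu : ∀ x ∈ Ioi R, HasDerivAt (fun x : ℝ => ((x ^ p : ℝ) : ℂ))
      ((p * x ^ (p - 1) : ℝ) : ℂ) x := by
    intro x hx
    exact (Real.hasDerivAt_rpow_const (Or.inl (lt_trans hR hx).ne')).ofReal_comp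
  have hdv : ∀ x : ℝ, HasDerivAt (fun x : ℝ => -Complex.exp (-(z * x)) / z)
      (Complex.exp (-(z * x))) x := by
    intro x
    have h1 : HasDerivAt (fun x : ℝ => -(z * (x:ℂ))) (-(z * 1)) x :=
      ((Complex.ofRealCLM.hasDerivAt (x := x)).const_mul z).neg
    refine (h1.cexp.neg.div_const z).congr_deriv ?_
    field_simp
  have hcont : ContinuousAt (fun x : ℝ => ((x ^ p : ℝ) : ℂ) * (-Complex.exp (-(z * x)) / z)) R := by
    refine ContinuousAt.mul ?_ (hdv R).continuousAt
    exact Complex.continuous_ofReal.continuousAt.comp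
      (Real.continuousAt_rpow_const _ _ (Or.inl hR.ne'))
  have hinf : Tendsto (fun x : ℝ => ((x ^ p : ℝ) : ℂ) * (-Complex.exp (-(z * x)) / z))
      atTop (𝓝 0) := by
    have h0 : Tendsto (fun x : ℝ => x ^ p * ‖z‖⁻¹) atTop (𝓝 0) := by
      have := (tendsto_rpow_neg_atTop (y := -p) (by linarith)).mul_const ‖z‖⁻¹
      simpa using this
    refine squeeze_zero_norm' ?_ h0
    filter_upwards [eventually_gt_atTop 0] with x hx
    have h2 : 0 < x ^ p := Real.rpow_pos_of_pos hx _
    rw [norm_mul, norm_div, norm_neg, Complex.norm_real, Real.norm_of_nonneg h2.le, div_eq_mul_inv]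
    have := hexp x hx
    have h3 : 0 ≤ x ^ p * ‖z‖⁻¹ := by positivity
    nlinarith
  have key := integral_Ioi_mul_deriv_eq_deriv_mul hdu (fun x _ => hdv x)
    (by refine hint0.congr_fun (fun x _ => ?_) measurableSet_Ioi; simp [mul_comm]) hint
    (hcont.tendsto.mono_left nhdsWithin_le_nhds) hinf
  have e1 : ∫ u in Ioi R, Complex.exp (-(z * u)) * ((u ^ p : ℝ) : ℂ)
      = ∫ u in Ioi R, ((u ^ p : ℝ) : ℂ) * Complex.exp (-(z * u)) := by
    congr 1; ext u; ring
  rw [e1, key]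
  have hB1 : ‖∫ x in Ioi R, (((p * x ^ (p - 1) : ℝ) : ℂ)) * (-Complex.exp (-(z * x)) / z)‖
      ≤ R ^ p / ‖z‖ := by
    refine (norm_integral_le_of_norm_le hp1 hb').trans (le_of_eq ?_)
    rw [integral_const_mul, integral_const_mul, integral_Ioi_rpow_of_lt (by linarith) hR]
    rw [sub_add_cancel]
    have hpne : p ≠ 0 := hp0.ne
    field_simp
  have hB2 : ‖((R ^ p : ℝ) : ℂ) * (-Complex.exp (-(z * R)) / z)‖ ≤ R ^ p / ‖z‖ := by
    have h2 : 0 < R ^ p := Real.rpow_pos_of_pos hR _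
    rw [norm_mul, norm_div, norm_neg, Complex.norm_real, Real.norm_of_nonneg h2.le]
    rw [mul_div_assoc']
    gcongr
    have := hexp R hR
    nlinarith
  calc _ ≤ ‖((R ^ p : ℝ) : ℂ) * (-Complex.exp (-(z * R)) / z)‖ +
        ‖∫ x in Ioi R, (((p * x ^ (p - 1) : ℝ) : ℂ)) * (-Complex.exp (-(z * x)) / z)‖ := by
        rw [zero_sub]
        refine (norm_sub_le _ _).trans ?_
        rw [norm_neg]
    _ ≤ R ^ p / ‖z‖ + R ^ p / ‖z‖ := add_le_add hB2 hB1
    _ = _ := by ring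

lemma head_aux (p : ℝ) (hp : -1 < p) (w : ℝ) (R : ℝ) :
    Tendsto (fun e : ℝ => ∫ u in Ioc 0 R, Complex.exp (-((e - Complex.I * w) * u)) *
      ((u ^ p : ℝ) : ℂ)) (𝓝[>] 0)
      (𝓝 (∫ u in Ioc 0 R, Complex.exp (Complex.I * u * w) * ((u ^ p : ℝ) : ℂ))) := by
  refine tendsto_integral_filter_of_dominated_convergence (fun u : ℝ => u ^ p) ?_ ?_ ?_ ?_
  · exact Eventually.of_forall fun e => (meas_aux _ p).aestronglyMeasurable
  · filter_upwards [self_mem_nhdsWithin] with e he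
    refine (ae_restrict_iff' measurableSet_Ioc).2 (ae_of_all _ fun u hu => ?_)
    rw [norm_integrand_aux _ p u hu.1]
    have he' : 0 < e := he
    have h0 : 0 ≤ u ^ p := Real.rpow_nonneg hu.1.le _
    have : Real.exp (-(((e:ℂ) - Complex.I * w).re * u)) ≤ 1 := by
      apply Real.exp_le_one_iff.2
      have := mul_pos he' hu.1
      simp; linarith
    nlinarith
  · rcases le_total 0 R with h | h
    · exact (intervalIntegrable_iff_integrableOn_Ioc_of_le h).1
        (intervalIntegral.intervalIntegrable_rpow' hp)
    · simp [Ioc_eq_empty (not_lt.2 h)]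
  · refine ae_of_all _ fun u => ?_
    refine Tendsto.mono_left ?_ nhdsWithin_le_nhds
    have : Continuous (fun e : ℝ => Complex.exp (-((e - Complex.I * w) * u)) *
      ((u ^ p : ℝ) : ℂ)) := by fun_prop
    refine this.tendsto' _ _ ?_
    congr 2
    push_cast; ring

lemma value_aux (Y ω : ℝ) (hω : ω ≠ 0) :
    (-(Complex.I * ω)) ^ (-((2 - Y : ℝ) : ℂ)) = -((|ω| ^ (Y - 2) : ℝ) : ℂ) *
        Complex.exp (-Complex.I * Real.sign ω * π * Y / 2) := by
  have hne : -(Complex.I * (ω:ℂ)) ≠ 0 := by simp [hω]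
  have habs : 0 < |ω| := abs_pos.2 hω
  have hexp : ∀ σ : ℝ, σ = 1 ∨ σ = -1 →
      Complex.log (-(Complex.I * ω)) = (Real.log |ω| : ℝ) + (-(σ * π / 2) * Complex.I) →
      (-(Complex.I * ω)) ^ (-((2 - Y : ℝ) : ℂ)) = -((|ω| ^ (Y - 2) : ℝ) : ℂ) *
        Complex.exp (-Complex.I * σ * π * Y / 2) := by
    intro σ hσ hl
    have hm : Complex.exp (σ * π * Complex.I) = -1 := by
      rcases hσ with rfl | rfl
      · simp [Complex.exp_pi_mul_I]
      · simp [Complex.exp_neg, Complex.exp_pi_mul_I]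
    rw [Complex.cpow_def_of_ne_zero hne, hl, Real.rpow_def_of_pos habs]
    have : ((Real.log |ω| : ℝ) + (-((σ:ℂ) * π / 2) * Complex.I)) * (-((2 - Y : ℝ) : ℂ))
      = ((Real.log |ω| * (Y - 2) : ℝ) : ℂ) + (-Complex.I * σ * π * Y / 2) +
        σ * π * Complex.I := by
      push_cast; ring
    rw [this, Complex.exp_add, Complex.exp_add, hm, Complex.ofReal_exp]
    ring
  rcases lt_or_gt_of_ne hω with h | h
  · rw [Real.sign_of_neg h]
    apply hexp _ (Or.inr rfl)
    have : -(Complex.I * (ω:ℂ)) = ((|ω| : ℝ) : ℂ) * Complex.I := by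
      rw [abs_of_neg h]; push_cast; ring
    rw [this, Complex.log_ofReal_mul habs Complex.I_ne_zero, Complex.log_I]
    push_cast; ring
  · rw [Real.sign_of_pos h]
    apply hexp _ (Or.inl rfl)
    have : -(Complex.I * (ω:ℂ)) = ((|ω| : ℝ) : ℂ) * (-Complex.I) := by
      rw [abs_of_pos h]; ring
    rw [this, Complex.log_ofReal_mul habs (neg_ne_zero.2 Complex.I_ne_zero), Complex.log_neg_I]
    push_cast; ring

/-- for `Y ∈ (1,2)` and `ω ≠ 0`, the improper integral
`lim_{R→∞} ∫_0^R e^{iuω} u^{1−Y} du` exists and equals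
`−|ω|^{Y−2} e^{−i·sgn(ω)·πY/2} Γ(2−Y)`. -/
theorem fresnel_type_integral
    (Y : ℝ) (hY1 : 1 < Y) (hY2 : Y < 2) (ω : ℝ) (hω : ω ≠ 0) :
    Tendsto
      (fun R : ℝ => ∫ u in Set.Ioc (0 : ℝ) R,
        Complex.exp (Complex.I * u * ω) * ((u ^ (1 - Y) : ℝ) : ℂ))
      atTop
      (𝓝 (-((|ω| ^ (Y - 2) : ℝ) : ℂ) *
        Complex.exp (-Complex.I * Real.sign ω * π * Y / 2) * (Real.Gamma (2 - Y) : ℂ))) := by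
  rw [← value_aux Y ω hω]
  have habs : 0 < |ω| := abs_pos.2 hω
  have hbound : ∀ R : ℝ, 0 < R →
      ‖(∫ u in Set.Ioc (0 : ℝ) R, Complex.exp (Complex.I * u * ω) * ((u ^ (1 - Y) : ℝ) : ℂ))
        - (-(Complex.I * ω)) ^ (-((2 - Y : ℝ) : ℂ)) * (Real.Gamma (2 - Y) : ℂ)‖
      ≤ 2 * R ^ (1 - Y) / |ω| := by
    intro R hR
    have hG : Tendsto (fun e : ℝ => ((e:ℂ) - Complex.I * ω) ^ (-((2 - Y : ℝ) : ℂ)) *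
        (Real.Gamma (2 - Y) : ℂ)) (𝓝[>] 0)
        (𝓝 ((-(Complex.I * ω)) ^ (-((2 - Y : ℝ) : ℂ)) * (Real.Gamma (2 - Y) : ℂ))) := by
      refine Tendsto.mul_const _ (Tendsto.cpow ?_ tendsto_const_nhds ?_)
      · refine Tendsto.mono_left ?_ nhdsWithin_le_nhds
        have : Continuous (fun e : ℝ => (e:ℂ) - Complex.I * ω) := by fun_prop
        exact this.tendsto' _ _ (by simp)
      · right; simpa using hω
    refine le_of_tendsto ((head_aux (1 - Y) (by linarith) ω R).sub hG).norm ?_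
    filter_upwards [self_mem_nhdsWithin] with e he
    have he' : 0 < e := he
    have hz : 0 < ((e:ℂ) - Complex.I * ω).re := by simpa using he'
    have hg := gamma_aux (2 - Y) (by linarith) ((e:ℂ) - Complex.I * ω) hz
    rw [show 2 - Y - 1 = 1 - Y by ring] at hg
    have hi := integrable_aux ((e:ℂ) - Complex.I * ω) (1 - Y) hz (by linarith)
    have hsplit := setIntegral_union (Ioc_disjoint_Ioi (le_refl R)) measurableSet_Ioi
      (hi.mono_set Ioc_subset_Ioi_self) (hi.mono_set (Ioi_subset_Ioi hR.le))
    rw [Ioc_union_Ioi_eq_Ioi hR.le] at hsplit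
    rw [← hg, hsplit, sub_add_cancel_left, norm_neg]
    refine (tail_aux (1 - Y) (by linarith) (by linarith) _ hz R hR).trans ?_
    have : |ω| ≤ ‖(e:ℂ) - Complex.I * ω‖ := by
      simpa using Complex.abs_im_le_norm ((e:ℂ) - Complex.I * ω)
    gcongr
  rw [tendsto_iff_norm_sub_tendsto_zero]
  have h0 : Tendsto (fun R : ℝ => 2 * R ^ (1 - Y) / |ω|) atTop (𝓝 0) := by
    have := ((tendsto_rpow_neg_atTop (y := Y - 1) (by linarith)).const_mul 2).div_const |ω|
    simpa using this
  refine squeeze_zero' (Eventually.of_forall fun _ => norm_nonneg _) ?_ h0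
  filter_upwards [eventually_gt_atTop 0] with R hR
  exact hbound R hR

end
end
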